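/- arXiv:2509.15822 — 6 statements merged into one kernel-verified Lean document; each statement's English description precedes it below -/
import Mathlib

section
/- Assume q ≤ 1/2, q + 2λ ≤ 1, λ > 0, and 0 < q. For any connected template G = (V,E) and any labeling π ∈ Π_V: | E[P_{G,π}] / √(E[P_{G,π}²]) | ≤ min( K^{−(|V|−1)}·(λ/√q̄)^{|E|} , λ^{|E|/2} / K^{(|V|−1)/2} ). -/
/-!
Given the labels, the edges are independent, so the conditional moments of the monomial factor
over the edges of the template (`expec_PG_pow`); this uses that distinct template edges occupy
distinct slots (`slot_injective`).

An edge contributes `λ` to the conditional mean if its endpoints share a label and `0` otherwise.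
As the template is connected, the conditional mean vanishes unless all `|V|` labels agree, an event
of probability `K^{-(|V|-1)}` (`prob_agree`), so the mean is `K^{-(|V|-1)} λ^{|E|}` (`expec_PG`).

For the second moment, an edge contributes `q̄ = q(1-q)` or `p̄ = q̄ + λ(1-2q)`. Since `p̄ ≥ q̄`, the
second moment is at least `q̄^{|E|}` (`expec_PG_sq_ge_qbar`), which gives the first bound. Keeping
only the event that all labels agree, and using `p̄ ≥ λ`, it is also at least the mean itself
(`expec_PG_sq_ge_lam`), so the ratio is at most the square root of the mean, the second bound.
-/

open Classical Finset

noncomputable section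

namespace SBM

/-- Index type for the edge slots of a graph on `n` nodes: ordered pairs `i < j`. -/
abbrev Pairs (n : ℕ) := {p : Fin n × Fin n // p.1 < p.2}

/-- A configuration of edges: one Boolean per pair `i < j`. -/
abbrev EdgeConf (n : ℕ) := Pairs n → Bool

/-- Community labels of the `n` nodes, with `K` communities. -/
abbrev Lab (n K : ℕ) := Fin n → Fin K

/-- The recentered symmetric adjacency entries `Y i j = Y*_{ij} - q` (and `0` on the diagonal). -/
def Ymat (n : ℕ) (q : ℝ) (y : EdgeConf n) (i j : Fin n) : ℝ :=
  if h : i = j then 0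
  else (if y ⟨(min i j, max i j), min_lt_max.mpr h⟩ then 1 else 0) - q

/-- Conditional connection probability of a pair given the labels. -/
def pEdge (n K : ℕ) (q lam : ℝ) (z : Lab n K) (p : Pairs n) : ℝ :=
  if z p.1.1 = z p.1.2 then q + lam else q

/-- SBM probability weight of a configuration `(z, y)`: labels are i.i.d. uniform on `Fin K`
and, conditionally on `z`, edges are independent Bernoulli. -/
def wt (n K : ℕ) (q lam : ℝ) (z : Lab n K) (y : EdgeConf n) : ℝ :=
  ((K : ℝ)⁻¹) ^ n *
    ∏ p : Pairs n, (if y p then pEdge n K q lam z p else 1 - pEdge n K q lam z p)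

/-- Expectation under the SBM. -/
def expec (n K : ℕ) (q lam : ℝ) (F : Lab n K → EdgeConf n → ℝ) : ℝ :=
  ∑ z : Lab n K, ∑ y : EdgeConf n, wt n K q lam z y * F z y

/-- Expectation conditionally on `z i = z j`. -/
def expecEq (n K : ℕ) (q lam : ℝ) (i j : Fin n) (F : Lab n K → EdgeConf n → ℝ) : ℝ :=
  expec n K q lam (fun z y => if z i = z j then F z y else 0) /
    expec n K q lam (fun z _ => if z i = z j then 1 else 0)

/-- Expectation conditionally on `z i ≠ z j`. -/
def expecNe (n K : ℕ) (q lam : ℝ) (i j : Fin n) (F : Lab n K → EdgeConf n → ℝ) : ℝ :=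
  expec n K q lam (fun z y => if z i ≠ z j then F z y else 0) /
    expec n K q lam (fun z _ => if z i ≠ z j then 1 else 0)

/-- Variance conditionally on `z i = z j`. -/
def varEq (n K : ℕ) (q lam : ℝ) (i j : Fin n) (F : Lab n K → EdgeConf n → ℝ) : ℝ :=
  expecEq n K q lam i j (fun z y => F z y ^ 2) - expecEq n K q lam i j F ^ 2

/-- Variance conditionally on `z i ≠ z j`. -/
def varNe (n K : ℕ) (q lam : ℝ) (i j : Fin n) (F : Lab n K → EdgeConf n → ℝ) : ℝ :=
  expecNe n K q lam i j (fun z y => F z y ^ 2) - expecNe n K q lam i j F ^ 2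

/-- The (centered) membership indicator `x = 1{z i0 = z i1} - 1/K`. -/
def xind (n K : ℕ) (i0 i1 : Fin n) (z : Lab n K) : ℝ :=
  (if z i0 = z i1 then 1 else 0) - 1 / K

/-- A template: a finite simple graph on `Fin v` (edges stored as ordered pairs `a < b`)
with the two distinguished nodes `0` and `1`. -/
structure Template where
  v : ℕ
  hv : 2 ≤ v
  E : Finset (Fin v × Fin v)
  hE : ∀ e ∈ E, e.1 < e.2

namespace Template

/-- First distinguished node. -/
def v1 (T : Template) : Fin T.v := ⟨0, by have := T.hv; omega⟩

/-- Second distinguished node. -/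
def v2 (T : Template) : Fin T.v := ⟨1, by have := T.hv; omega⟩

/-- The underlying simple graph of a template. -/
def graph (T : Template) : SimpleGraph (Fin T.v) :=
  SimpleGraph.fromRel fun a b => (a, b) ∈ T.E

end Template

/-- Labelings `Π_V`: injections sending the distinguished nodes to the nodes `0` and `1`. -/
def PiV (n : ℕ) (hn : 2 ≤ n) (T : Template) : Finset (Fin T.v ↪ Fin n) :=
  Finset.univ.filter fun π =>
    π T.v1 = (⟨0, by omega⟩ : Fin n) ∧ π T.v2 = (⟨1, by omega⟩ : Fin n)

/-- The monomial `P_{G,π}(Y) = ∏_{(u,w) ∈ E} Y_{π u, π w}`. -/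
def PG (n : ℕ) (q : ℝ) (T : Template) (π : Fin T.v ↪ Fin n) (y : EdgeConf n) : ℝ :=
  ∏ e ∈ T.E, Ymat n q y (π e.1) (π e.2)

/-- A matching between the node sets of two templates: no node appears twice. -/
def IsMatching (T1 T2 : Template) (M : Finset (Fin T1.v × Fin T2.v)) : Prop :=
  (∀ p ∈ M, ∀ p' ∈ M, (p : Fin T1.v × Fin T2.v).1 = (p' : Fin T1.v × Fin T2.v).1 → p = p') ∧
  (∀ p ∈ M, ∀ p' ∈ M, (p : Fin T1.v × Fin T2.v).2 = (p' : Fin T1.v × Fin T2.v).2 → p = p')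

/-- `Π(M)`: pairs of labelings compatible with the matching `M`. -/
def PiM (n : ℕ) (hn : 2 ≤ n) (T1 T2 : Template) (M : Finset (Fin T1.v × Fin T2.v)) :
    Set ((Fin T1.v ↪ Fin n) × (Fin T2.v ↪ Fin n)) :=
  {pp | pp.1 ∈ PiV n hn T1 ∧ pp.2 ∈ PiV n hn T2 ∧
    ∀ (a : Fin T1.v) (b : Fin T2.v), pp.1 a = pp.2 b ↔ (a, b) ∈ M}

/-- An edge of `T1` is matched if its two endpoints are matched to the endpoints of an
edge of `T2`. -/
def EdgeMatched1 (T1 T2 : Template) (M : Finset (Fin T1.v × Fin T2.v))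
    (e : Fin T1.v × Fin T1.v) : Prop :=
  ∃ e' ∈ T2.E, ((e.1, e'.1) ∈ M ∧ (e.2, e'.2) ∈ M) ∨ ((e.1, e'.2) ∈ M ∧ (e.2, e'.1) ∈ M)

/-- An edge of `T2` is matched if its two endpoints are matched to the endpoints of an
edge of `T1`. -/
def EdgeMatched2 (T1 T2 : Template) (M : Finset (Fin T1.v × Fin T2.v))
    (e' : Fin T2.v × Fin T2.v) : Prop :=
  ∃ e ∈ T1.E, ((e.1, e'.1) ∈ M ∧ (e.2, e'.2) ∈ M) ∨ ((e.1, e'.2) ∈ M ∧ (e.2, e'.1) ∈ M)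

/-- `|E_Δ|`: the number of unmatched edges (in either template). -/
def EDeltaCard (T1 T2 : Template) (M : Finset (Fin T1.v × Fin T2.v)) : ℕ :=
  (T1.E.filter fun e => ¬ EdgeMatched1 T1 T2 M e).card +
    (T2.E.filter fun e => ¬ EdgeMatched2 T1 T2 M e).card

/-- `|U^{(1)}|`: the number of unmatched nodes of the first template. -/
def U1card (T1 T2 : Template) (M : Finset (Fin T1.v × Fin T2.v)) : ℕ :=
  (Finset.univ.filter fun a : Fin T1.v => ∀ p ∈ M, (p : Fin T1.v × Fin T2.v).1 ≠ a).card

/-- `|U^{(2)}|`: the number of unmatched nodes of the second template. -/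
def U2card (T1 T2 : Template) (M : Finset (Fin T1.v × Fin T2.v)) : ℕ :=
  (Finset.univ.filter fun b : Fin T2.v => ∀ p ∈ M, (p : Fin T1.v × Fin T2.v).2 ≠ b).card

/-- A pair of matched nodes is semi-matched if one of them is incident to an unmatched edge. -/
def IsSemiMatched (T1 T2 : Template) (M : Finset (Fin T1.v × Fin T2.v))
    (p : Fin T1.v × Fin T2.v) : Prop :=
  (∃ e ∈ T1.E, (e.1 = p.1 ∨ e.2 = p.1) ∧ ¬ EdgeMatched1 T1 T2 M e) ∨
  (∃ e' ∈ T2.E, (e'.1 = p.2 ∨ e'.2 = p.2) ∧ ¬ EdgeMatched2 T1 T2 M e')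

/-- `M_SM`: the semi-matched pairs of `M`. -/
def MSM (T1 T2 : Template) (M : Finset (Fin T1.v × Fin T2.v)) :
    Finset (Fin T1.v × Fin T2.v) :=
  M.filter (IsSemiMatched T1 T2 M)

/-- `M_PM`: the perfectly matched pairs of `M`. -/
def MPM (T1 T2 : Template) (M : Finset (Fin T1.v × Fin T2.v)) :
    Finset (Fin T1.v × Fin T2.v) :=
  M.filter fun p => ¬ IsSemiMatched T1 T2 M p

/-- A node is isolated if it is incident to no edge. -/
def IsIsolated (T : Template) (w : Fin T.v) : Prop :=
  ∀ e ∈ T.E, e.1 ≠ w ∧ e.2 ≠ w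

/-- The pruned matching `M⁻`: remove the pair of first (resp. second) distinguished nodes
whenever that node is isolated in `T1` or in `T2`. -/
def Mminus (T1 T2 : Template) (M : Finset (Fin T1.v × Fin T2.v)) :
    Finset (Fin T1.v × Fin T2.v) :=
  M.filter fun p =>
    ¬ ((p = (T1.v1, T2.v1) ∧ (IsIsolated T1 T1.v1 ∨ IsIsolated T2 T2.v1)) ∨
       (p = (T1.v2, T2.v2) ∧ (IsIsolated T1 T1.v2 ∨ IsIsolated T2 T2.v2)))

/-- `M ∈ M*`: every connected component of `T1` and of `T2` meets the pruned matching. -/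
def InMstar (T1 T2 : Template) (M : Finset (Fin T1.v × Fin T2.v)) : Prop :=
  (∀ w : Fin T1.v, ∃ p ∈ Mminus T1 T2 M, T1.graph.Reachable w p.1) ∧
  (∀ w : Fin T2.v, ∃ p ∈ Mminus T1 T2 M, T2.graph.Reachable w p.2)


/-! ### Conditional moments given the labels -/

/-- The edge slot `{π e.1, π e.2}` that a template edge `e` occupies under the labeling `π`. -/
def slot {n : ℕ} (T : Template) (π : Fin T.v ↪ Fin n) (e : {e // e ∈ T.E}) : Pairs n :=
  ⟨(min (π e.1.1) (π e.1.2), max (π e.1.1) (π e.1.2)),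
    min_lt_max.mpr fun h => (T.hE e.1 e.2).ne (π.injective h)⟩

/-- The orientation `a < b` of stored edges rules out the coincidence of an edge with its
reversal. -/
lemma slot_injective {n : ℕ} (T : Template) (π : Fin T.v ↪ Fin n) :
    Function.Injective (slot T π) := by
  rintro ⟨⟨a, b⟩, he⟩ ⟨⟨c, d⟩, he'⟩ h
  have h1 : a < b := T.hE _ he
  have h2 : c < d := T.hE _ he'
  have hab : π a ≠ π b := fun h => h1.ne (π.injective h)
  simp only [slot, Subtype.mk.injEq, Prod.mk.injEq] at h ⊢
  obtain ⟨hm, hM⟩ := h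
  have key : (π a = π c ∧ π b = π d) ∨ (π a = π d ∧ π b = π c) := by
    rcases le_total (π a) (π b) with h3 | h3 <;> rcases le_total (π c) (π d) with h4 | h4 <;>
      simp_all
  rcases key with ⟨h3, h4⟩ | ⟨h3, h4⟩
  · exact ⟨π.injective h3, π.injective h4⟩
  · have h5 := π.injective h3
    have h6 := π.injective h4
    subst h5 h6
    exact absurd h1 h2.not_gt

lemma PG_eq_prod_slot {n : ℕ} (q : ℝ) (T : Template) (π : Fin T.v ↪ Fin n) (y : EdgeConf n) :
    PG n q T π y = ∏ e : {e // e ∈ T.E}, ((if y (slot T π e) then 1 else 0) - q) := by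
  unfold PG
  rw [← Finset.prod_coe_sort]
  refine Finset.prod_congr rfl fun e _ => ?_
  have hne : π e.1.1 ≠ π e.1.2 := fun h => (T.hE e.1 e.2).ne (π.injective h)
  simp only [Ymat, hne, slot, dite_false]
  -- The two sides differ only in the decidability instance of the conditional.
  congr

/-- Conditional independence of the edges: given the labels, the expectation of a product of
functions of distinct edge slots is the product of the Bernoulli expectations. -/
lemma sum_edges_prod {n : ℕ} {ι : Type*} [Fintype ι] (s : ι → Pairs n)
    (hs : Function.Injective s) (r : Pairs n → ℝ) (f : Bool → ℝ) :
    ∑ y : EdgeConf n, (∏ p, (if y p then r p else 1 - r p)) * ∏ e, f (y (s e)) =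
      ∏ e, (r (s e) * f true + (1 - r (s e)) * f false) := by
  have conv : ∀ h : Pairs n → ℝ, ∏ e, h (s e) =
      ∏ p, if p ∈ Finset.univ.image s then h p else 1 := by
    intro h
    rw [Finset.prod_ite_mem, Finset.univ_inter, Finset.prod_image fun a _ b _ hab => hs hab]
  rw [conv fun p => r p * f true + (1 - r p) * f false]
  have hsum : ∀ p : Pairs n,
      (if p ∈ Finset.univ.image s then r p * f true + (1 - r p) * f false else 1) =
      ∑ b : Bool, (if b then r p else 1 - r p) *
        (if p ∈ Finset.univ.image s then f b else 1) := by
    intro p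
    split_ifs <;> simp
  simp_rw [hsum]
  rw [Fintype.prod_sum]
  refine Finset.sum_congr rfl fun y _ => ?_
  rw [conv fun p => f (y p), ← Finset.prod_mul_distrib]

/-- The `k`-th moment, with the edges integrated out: every template edge contributes the `k`-th
moment of its Bernoulli variable recentered by `q`. -/
lemma expec_PG_pow {n : ℕ} (K : ℕ) (q lam : ℝ) (T : Template) (π : Fin T.v ↪ Fin n) (k : ℕ) :
    expec n K q lam (fun _ y => PG n q T π y ^ k) =
      ∑ z : Lab n K, ((K : ℝ)⁻¹) ^ n * ∏ e : {e // e ∈ T.E},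
        if z (π e.1.1) = z (π e.1.2) then (q + lam) * (1 - q) ^ k + (1 - (q + lam)) * (-q) ^ k
        else q * (1 - q) ^ k + (1 - q) * (-q) ^ k := by
  unfold expec wt
  refine Finset.sum_congr rfl fun z _ => ?_
  simp_rw [mul_assoc]
  rw [← Finset.mul_sum]
  congr 1
  simp_rw [PG_eq_prod_slot, ← Finset.prod_pow]
  rw [sum_edges_prod (slot T π) (slot_injective T π) (pEdge n K q lam z)
    (fun b => ((if b then 1 else 0) - q) ^ k)]
  refine Finset.prod_congr rfl fun e _ => ?_
  have hp : pEdge n K q lam z (slot T π e) =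
      if z (π e.1.1) = z (π e.1.2) then q + lam else q := by
    unfold pEdge slot
    rcases le_total (π e.1.1) (π e.1.2) with h | h
    · simp [h]
    · simp [h, eq_comm]
  rw [hp]
  by_cases h : z (π e.1.1) = z (π e.1.2) <;> simp [h]

/-! ### The event that all template labels agree -/

/-- By connectedness, labels agreeing along every edge are constant on the template. -/
lemma agree_of_edges {α : Type*} (T : Template) (hconn : T.graph.Connected)
    (c : Fin T.v → α) (h : ∀ e ∈ T.E, c e.1 = c e.2) (a b : Fin T.v) : c a = c b := by
  obtain ⟨w⟩ := hconn.preconnected a b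
  induction w with
  | nil => rfl
  | cons hadj _ ih =>
    rw [← ih]
    rw [Template.graph, SimpleGraph.fromRel_adj] at hadj
    rcases hadj.2 with h' | h'
    · exact h _ h'
    · exact (h _ h').symm

lemma prod_agree {n K : ℕ} (T : Template) (hconn : T.graph.Connected) (π : Fin T.v ↪ Fin n)
    (z : Lab n K) (x : ℝ) :
    (∏ e : {e // e ∈ T.E}, if z (π e.1.1) = z (π e.1.2) then x else 0) =
      if ∀ a, z (π a) = z (π T.v1) then x ^ T.E.card else 0 := by
  split_ifs with h
  · rw [Finset.prod_congr rfl fun e _ => if_pos ((h e.1.1).trans (h e.1.2).symm)]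
    simp
  · have : ∃ e ∈ T.E, z (π e.1) ≠ z (π e.2) := by
      by_contra! hc
      exact h fun a => agree_of_edges T hconn (fun a => z (π a)) hc a T.v1
    obtain ⟨e, he, hne⟩ := this
    exact Finset.prod_eq_zero (Finset.mem_univ ⟨e, he⟩) (if_neg hne)

/-- Labelings of the `n` nodes that are constantly `c` on the template: only the `n - v` remaining
nodes are free. -/
lemma card_const {n v K : ℕ} (π : Fin v ↪ Fin n) (c : Fin K) :
    (Finset.univ.filter fun z : Lab n K => ∀ a, z (π a) = c).card = K ^ (n - v) := by
  have : (Finset.univ.filter fun z : Lab n K => ∀ a, z (π a) = c) =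
      Fintype.piFinset fun i => if i ∈ Finset.univ.map π then {c} else Finset.univ := by
    ext z
    simp only [Finset.mem_filter, Finset.mem_univ, true_and, Fintype.mem_piFinset]
    constructor
    · intro h i
      split_ifs with hi
      · obtain ⟨a, -, rfl⟩ := Finset.mem_map.mp hi
        simpa using h a
      · simp
    · intro h a
      simpa using h (π a)
  rw [this, Fintype.card_piFinset]
  have : ∀ i, (if i ∈ Finset.univ.map π then {c} else (Finset.univ : Finset (Fin K))).card =
      if i ∈ (Finset.univ.map π)ᶜ then K else 1 := by
    intro i
    by_cases hi : i ∈ Finset.univ.map π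
    · rw [if_pos hi, if_neg (by simpa using hi)]; simp
    · rw [if_neg hi, if_pos (Finset.mem_compl.mpr hi)]; simp
  simp_rw [this]
  rw [Finset.prod_ite_mem, Finset.univ_inter, Finset.prod_const, Finset.card_compl]
  simp

/-- The probability that all the nodes of the template receive the same label. -/
lemma prob_agree {n K : ℕ} (hK : 0 < K) (T : Template) (π : Fin T.v ↪ Fin n) (x : ℝ) :
    (∑ z : Lab n K, ((K : ℝ)⁻¹) ^ n * if ∀ a, z (π a) = z (π T.v1) then x else 0) =
      ((K : ℝ)⁻¹) ^ (T.v - 1) * x := by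
  have hv := T.hv
  have hvn : T.v ≤ n := by simpa using Fintype.card_le_of_embedding π
  have hcard : (Finset.univ.filter fun z : Lab n K => ∀ a, z (π a) = z (π T.v1)).card =
      K * K ^ (n - T.v) := by
    rw [Finset.card_eq_sum_card_fiberwise (f := fun z : Lab n K => z (π T.v1))
      (t := Finset.univ) (by simp)]
    have : ∀ c : Fin K, ((Finset.univ.filter fun z : Lab n K =>
        ∀ a, z (π a) = z (π T.v1)).filter fun z => z (π T.v1) = c).card = K ^ (n - T.v) := by
      intro c
      rw [← card_const π c]
      congr 1
      ext z
      simp only [Finset.mem_filter, Finset.mem_univ, true_and]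
      exact ⟨fun h a => (h.1 a).trans h.2, fun h => ⟨fun a => (h a).trans (h _).symm, h _⟩⟩
    rw [Finset.sum_congr rfl fun c _ => this c]
    simp
  rw [← Finset.mul_sum, ← Finset.sum_filter, Finset.sum_const, hcard]
  have hK0 : (K : ℝ) ≠ 0 := by positivity
  have hn : n = (T.v - 1) + (1 + (n - T.v)) := by omega
  rw [nsmul_eq_mul]
  push_cast
  conv_lhs => rw [show ((K : ℝ)⁻¹) ^ n = ((K : ℝ)⁻¹) ^ (T.v - 1) * ((K : ℝ)⁻¹) ^ (1 + (n - T.v)) by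
    rw [← pow_add, ← hn]]
  rw [← pow_succ', add_comm 1, mul_assoc, ← mul_assoc (((K : ℝ)⁻¹) ^ (n - T.v + 1)), ← mul_pow,
    inv_mul_cancel₀ hK0, one_pow, one_mul]

/-! ### First and second moments of the monomial -/

lemma expec_PG {n K : ℕ} (hK : 0 < K) (q lam : ℝ) (T : Template) (hconn : T.graph.Connected)
    (π : Fin T.v ↪ Fin n) :
    expec n K q lam (fun _ y => PG n q T π y) = ((K : ℝ)⁻¹) ^ (T.v - 1) * lam ^ T.E.card := by
  have h := expec_PG_pow K q lam T π 1
  simp only [pow_one] at h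
  rw [h, ← prob_agree hK T π]
  refine Finset.sum_congr rfl fun z _ => ?_
  rw [← prod_agree T hconn]
  congr 1
  refine Finset.prod_congr rfl fun e _ => ?_
  split_ifs <;> ring

lemma expec_PG_sq {n : ℕ} (K : ℕ) (q lam : ℝ) (T : Template) (π : Fin T.v ↪ Fin n) :
    expec n K q lam (fun _ y => PG n q T π y ^ 2) =
      ∑ z : Lab n K, ((K : ℝ)⁻¹) ^ n * ∏ e : {e // e ∈ T.E},
        if z (π e.1.1) = z (π e.1.2) then q * (1 - q) + lam * (1 - 2 * q) else q * (1 - q) := by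
  rw [expec_PG_pow]
  refine Finset.sum_congr rfl fun z _ => ?_
  congr 1
  refine Finset.prod_congr rfl fun e _ => ?_
  split_ifs <;> ring

/-- Each conditional second moment is at least `q(1-q)`, since `1 - 2q ≥ 0`. -/
lemma expec_PG_sq_ge_qbar {n K : ℕ} (hK : 0 < K) {q lam : ℝ} (hq2 : q ≤ 1 / 2) (hlam : 0 < lam)
    (hq0 : 0 < q) (T : Template) (π : Fin T.v ↪ Fin n) :
    (q * (1 - q)) ^ T.E.card ≤ expec n K q lam (fun _ y => PG n q T π y ^ 2) := by
  have hqb : 0 ≤ q * (1 - q) := mul_nonneg hq0.le (by linarith)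
  have hl : 0 ≤ lam * (1 - 2 * q) := mul_nonneg hlam.le (by linarith)
  have hK0 : (K : ℝ) ≠ 0 := by positivity
  have hone : (q * (1 - q)) ^ T.E.card =
      ∑ _z : Lab n K, ((K : ℝ)⁻¹) ^ n * ∏ _e : {e // e ∈ T.E}, q * (1 - q) := by
    simp [hK0]
  rw [expec_PG_sq, hone]
  gcongr with z _ e _
  split_ifs <;> linarith

/-- On the event that all labels agree every factor is `q(1-q) + λ(1-2q) ≥ λ`, because
`q + 2λ ≤ 1`. -/
lemma expec_PG_sq_ge_lam {n K : ℕ} (hK : 0 < K) {q lam : ℝ}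
    (hql : q + 2 * lam ≤ 1) (hlam : 0 < lam) (hq0 : 0 < q) (T : Template)
    (hconn : T.graph.Connected) (π : Fin T.v ↪ Fin n) :
    ((K : ℝ)⁻¹) ^ (T.v - 1) * lam ^ T.E.card ≤
      expec n K q lam (fun _ y => PG n q T π y ^ 2) := by
  have hqb : 0 ≤ q * (1 - q) := mul_nonneg hq0.le (by linarith)
  rw [expec_PG_sq, ← prob_agree hK T π]
  refine Finset.sum_le_sum fun z _ => ?_
  rw [← prod_agree T hconn]
  refine mul_le_mul_of_nonneg_left ?_ (by positivity)
  refine Finset.prod_le_prod (fun e _ => ?_) fun e _ => ?_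
  · split_ifs <;> linarith
  · split_ifs
    · nlinarith
    · exact hqb

theorem statement8 (n K : ℕ) (q lam : ℝ) (hn : 2 ≤ n) (hK : 2 ≤ K) (hKn : K ≤ n)
    (hq2 : q ≤ 1 / 2) (hql : q + 2 * lam ≤ 1) (hlam : 0 < lam) (hq0 : 0 < q)
    (T : Template) (hconn : T.graph.Connected)
    (π : Fin T.v ↪ Fin n) (hπ : π ∈ PiV n hn T) :
    |expec n K q lam (fun _ y => PG n q T π y) /
        Real.sqrt (expec n K q lam (fun _ y => PG n q T π y ^ 2))| ≤
      min ((K : ℝ) ^ (-((T.v - 1 : ℕ) : ℝ)) * (lam / Real.sqrt (q * (1 - q))) ^ T.E.card)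
        (lam ^ ((T.E.card : ℝ) / 2) / (K : ℝ) ^ (((T.v - 1 : ℕ) : ℝ) / 2)) := by
  have hK0 : 0 < K := by omega
  have hKr : (0 : ℝ) < K := by exact_mod_cast hK0
  have hqb : 0 < q * (1 - q) := mul_pos hq0 (by linarith)
  have h1 := expec_PG_sq_ge_qbar (n := n) hK0 hq2 hlam hq0 T π
  have h2 := expec_PG_sq_ge_lam hK0 hql hlam hq0 T hconn π
  rw [expec_PG hK0 q lam T hconn π]
  set S := expec n K q lam (fun _ y => PG n q T π y ^ 2)
  set A : ℝ := ((K : ℝ)⁻¹) ^ (T.v - 1) * lam ^ T.E.card with hA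
  have hA0 : 0 < A := by positivity
  rw [abs_of_nonneg (by positivity)]
  refine le_min ?_ ?_
  · have hs : Real.sqrt (q * (1 - q)) ^ T.E.card ≤ Real.sqrt S := by
      apply Real.le_sqrt_of_sq_le
      rw [← pow_mul, mul_comm T.E.card, pow_mul, Real.sq_sqrt hqb.le]
      exact h1
    have hsq : 0 < Real.sqrt (q * (1 - q)) := Real.sqrt_pos.mpr hqb
    calc A / Real.sqrt S ≤ A / Real.sqrt (q * (1 - q)) ^ T.E.card := by gcongr
      _ = _ := by
        rw [hA, Real.rpow_neg hKr.le, Real.rpow_natCast, div_pow, inv_pow, mul_div_assoc]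
  · calc A / Real.sqrt S ≤ A / Real.sqrt A := by gcongr
      _ = Real.sqrt A := Real.div_sqrt
      _ = _ := by
        rw [hA, inv_pow, mul_comm, ← div_eq_mul_inv, Real.sqrt_div (by positivity),
          Real.sqrt_eq_rpow, Real.sqrt_eq_rpow, ← Real.rpow_natCast, ← Real.rpow_natCast,
          ← Real.rpow_mul hlam.le, ← Real.rpow_mul hKr.le]
        simp only [mul_one_div]

end SBM
end
end

section
/- Assume q ≤ 1/2, q + 2λ ≤ 1, λ > 0. Let G^(1), G^(2) be templates whose connected components containing at least one edge are (G^(1)_1,…,G^(1)_{c_1}) and (G^(2)_1,…,G^(2)_{c_2}). For any matching M, any (π^(1),π^(2)) ∈ Π(M), and any S_1 ⊆ {1,…,c_1}, S_2 ⊆ {1,…,c_2}: 0 ≤ E[ ∏_{i∈[c_1]∖S_1} P_{G^(1)_i,π^(1)} · ∏_{j∈[c_2]∖S_2} P_{G^(2)_j,π^(2)} ] · E[ ∏_{i∈S_1} P_{G^(1)_i,π^(1)} ] · E[ ∏_{j∈S_2} P_{G^(2)_j,π^(2)} ] ≤ λ^{|M_PM^{(S_1,S_2)}|/2} · E[ P_{G^(1),π^(1)}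 · P_{G^(2),π^(2)} ], where M_PM^{(S_1,S_2)} ⊆ M_PM is the set of perfectly matched pairs (v,v′) (excluding possibly the distinguished nodes when isolated) such that v belongs to some G^(1)_i with i∈S_1 or v′ belongs to some G^(2)_j with j∈S_2. -/
/-!
Given the labels `z`, the edges are independent, so the conditional moment of a product of centered
edge variables is a product over pairs `p = (i, j)` of affine functions, with nonnegative
coefficients, of `1{z_i = z_j}` (`expec_prod`): `lam * 1{z_i = z_j}` for a simple factor and
`q(1-q) + lam(1-2q) 1{z_i = z_j}` for a squared one.

Such products are positively correlated. Expanding them, this reduces to events of the form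
"`z` is constant along every pair of `X`". These are subgroups of `(ℤ/K)^n`, so the claim is that
the index of an intersection is at most the product of the indices (`labAvg_affine_mul_le`).
Hence the product of the three expectations is at most the average over `z` of the product of the
three conditional moments. Compared pair by pair with the conditional moment of
`P_{G¹,π¹} P_{G²,π²}`, this differs only on the pairs that are edges of both graphs and belong to a
selected component: there `lam² 1{z_i = z_j}` replaces `q(1-q) + lam(1-2q) 1{z_i = z_j}`. Since
`q + 2 lam ≤ 1` gives `lam ≤ q(1-q) + lam(1-2q)`, each such pair yields a factor `lam`
(`labAvg_mom_le`). Finally, every perfectly matched node in a selected component is an endpoint of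
one of these pairs, so there are at most twice as many such nodes as pairs (`card_perfect_le`).
-/

open Classical Finset

noncomputable section

namespace SBM

/-- Canonical representative (the minimum) of the connected component of `w`. -/
def compRep (T : Template) (w : Fin T.v) : Fin T.v :=
  (Finset.univ.filter fun u => T.graph.Reachable w u).min'
    ⟨w, by
      simp only [Finset.mem_filter, Finset.mem_univ, true_and]
      exact SimpleGraph.Reachable.refl w⟩

/-- The edges of the connected component of `w`. -/
def compEdges (T : Template) (w : Fin T.v) : Finset (Fin T.v × Fin T.v) :=
  T.E.filter fun e => T.graph.Reachable e.1 w

/-- The monomial attached to the connected component of `w`. -/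
def Pcomp (n : ℕ) (q : ℝ) (T : Template) (π : Fin T.v ↪ Fin n) (w : Fin T.v)
    (y : EdgeConf n) : ℝ :=
  ∏ e ∈ compEdges T w, Ymat n q y (π e.1) (π e.2)

/-- Representatives of the connected components of `T` containing at least one edge. -/
def edgeCompReps (T : Template) : Finset (Fin T.v) :=
  Finset.univ.filter fun w => compRep T w = w ∧ ∃ e ∈ T.E, T.graph.Reachable e.1 w

/-- The centered polynomial `P̄_{G,π} = ∏_l (P_{G_l,π} - E[P_{G_l,π}])`, the product running
over the connected components with at least one edge. -/
def Pbar (n K : ℕ) (q lam : ℝ) (T : Template) (π : Fin T.v ↪ Fin n) (y : EdgeConf n) : ℝ :=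
  ∏ w ∈ edgeCompReps T,
    (Pcomp n q T π w y - expec n K q lam fun _ y' => Pcomp n q T π w y')

/-- `|Aut(G)|`: the number of automorphisms of the template fixing both distinguished nodes. -/
def autCard (T : Template) : ℕ :=
  Nat.card {σ : Equiv.Perm (Fin T.v) //
    σ T.v1 = T.v1 ∧ σ T.v2 = T.v2 ∧ ∀ a b, T.graph.Adj a b ↔ T.graph.Adj (σ a) (σ b)}

/-- The variance proxy `𝕍(G) = ((n-2)!/(n-|V|)!) |Aut(G)| E[P_{G,π}²]
  = |Aut(G)| ∑_{π ∈ Π_V} E[P_{G,π}²]`. -/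
def VG (n K : ℕ) (hn : 2 ≤ n) (q lam : ℝ) (T : Template) : ℝ :=
  autCard T * ∑ π ∈ PiV n hn T, expec n K q lam fun _ y => PG n q T π y ^ 2

/-- The normalized invariant polynomial `Ψ_G = P̄_G / √𝕍(G)`. -/
def Psi (n K : ℕ) (hn : 2 ≤ n) (q lam : ℝ) (T : Template) (y : EdgeConf n) : ℝ :=
  (∑ π ∈ PiV n hn T, Pbar n K q lam T π y) / Real.sqrt (VG n K hn q lam T)

/-- A template suitable for `𝒢_{≤D}`: between `1` and `D` edges, and no isolated node
except possibly the distinguished ones. -/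
def GoodTemplate (D : ℕ) (T : Template) : Prop :=
  1 ≤ T.E.card ∧ T.E.card ≤ D ∧
    ∀ w : Fin T.v, w ≠ T.v1 → w ≠ T.v2 → ¬ IsIsolated T w

/-- Equivalence of templates: a graph isomorphism mapping distinguished nodes to
distinguished nodes. -/
def TEquiv (T1 T2 : Template) : Prop :=
  ∃ σ : Fin T1.v ≃ Fin T2.v, σ T1.v1 = T2.v1 ∧ σ T1.v2 = T2.v2 ∧
    ∀ a b, T1.graph.Adj a b ↔ T2.graph.Adj (σ a) (σ b)

/-- `𝒢` is a valid choice for `𝒢_{≤D}`: a maximal collection of pairwise non-equivalent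
good templates. -/
def IsTemplateBasis (D : ℕ) (𝒢 : Set Template) : Prop :=
  (∀ T ∈ 𝒢, GoodTemplate D T) ∧
  (∀ T1 ∈ 𝒢, ∀ T2 ∈ 𝒢, TEquiv T1 T2 → T1 = T2) ∧
  ∀ T, GoodTemplate D T → ∃ T' ∈ 𝒢, TEquiv T T'

/-- A matching containing the pairs of distinguished nodes. -/
def IsMatching12 (T1 T2 : Template) (M : Finset (Fin T1.v × Fin T2.v)) : Prop :=
  IsMatching T1 T2 M ∧ (T1.v1, T2.v1) ∈ M ∧ (T1.v2, T2.v2) ∈ M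

/-- The edit distance `d(G^{(1)}, G^{(2)}) = min_M |E_Δ|`. -/
def editDist (T1 T2 : Template) : ℕ :=
  sInf {k : ℕ | ∃ M : Finset (Fin T1.v × Fin T2.v),
    IsMatching12 T1 T2 M ∧ k = EDeltaCard T1 T2 M}


/-! ### Moments as averages over the labels -/

/-- The indicator `1{z_i = z_j}` for the pair `p = (i, j)`. -/
def agree {n K : ℕ} (z : Lab n K) (p : Pairs n) : ℝ := if z p.1.1 = z p.1.2 then 1 else 0

/-- Average over uniform i.i.d. labels. -/
def labAvg (n K : ℕ) (f : Lab n K → ℝ) : ℝ := ((K : ℝ)⁻¹) ^ n * ∑ z, f z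

/-- The centered edge variable of the pair `p`. -/
def Ypair {n : ℕ} (q : ℝ) (y : EdgeConf n) (p : Pairs n) : ℝ := (if y p then 1 else 0) - q

/-- Constant term of the conditional moment given `z` of `Y_p` to the power `1{p∈R} + 1{p∈R'}`,
as an affine function of `agree z p`. -/
def mom0 {n : ℕ} (q : ℝ) (R R' : Finset (Pairs n)) (p : Pairs n) : ℝ :=
  if p ∈ R ∧ p ∈ R' then q * (1 - q) else if p ∈ R ∨ p ∈ R' then 0 else 1

/-- Slope of the conditional moment whose constant term is `mom0`. -/
def mom1 {n : ℕ} (q lam : ℝ) (R R' : Finset (Pairs n)) (p : Pairs n) : ℝ :=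
  if p ∈ R ∧ p ∈ R' then lam * (1 - 2 * q) else if p ∈ R ∨ p ∈ R' then lam else 0

/-- The conditional moment given `z` of `Y_p` to the power `1{p∈R} + 1{p∈R'}`. -/
def mom {n K : ℕ} (q lam : ℝ) (R R' : Finset (Pairs n)) (z : Lab n K) (p : Pairs n) : ℝ :=
  mom0 q R R' p + mom1 q lam R R' p * agree z p

/-- Conditional independence of the edges given the labels factorises mixed moments. -/
lemma expec_prod (n K : ℕ) (q lam : ℝ) (R R' : Finset (Pairs n)) :
    expec n K q lam (fun _ y => (∏ p ∈ R, Ypair q y p) * ∏ p ∈ R', Ypair q y p) =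
      labAvg n K (fun z => ∏ p, mom q lam R R' z p) := by
  unfold expec labAvg
  rw [Finset.mul_sum]
  refine Finset.sum_congr rfl fun z _ => ?_
  have h1 : ∀ p : Pairs n, mom q lam R R' z p = ∑ b : Bool,
      (if b then pEdge n K q lam z p else 1 - pEdge n K q lam z p) *
        ((if p ∈ R then ((if b then 1 else 0) - q) else 1) *
          (if p ∈ R' then ((if b then 1 else 0) - q) else 1)) := by
    intro p
    simp only [mom, mom0, mom1, agree, pEdge, Fintype.sum_bool]
    by_cases hz : z p.1.1 = z p.1.2 <;> by_cases h1 : p ∈ R <;> by_cases h2 : p ∈ R' <;>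
      simp [hz, h1, h2] <;> ring
  simp_rw [h1]
  rw [Finset.prod_univ_sum, Fintype.piFinset_univ, Finset.mul_sum]
  refine Finset.sum_congr rfl fun y _ => ?_
  simp only [wt, Finset.prod_mul_distrib, Ypair, Finset.prod_ite_mem, Finset.univ_inter]
  ring

lemma mom0_nonneg {n : ℕ} {q : ℝ} (hq0 : 0 ≤ q) (hq2 : q ≤ 1 / 2) (R R' : Finset (Pairs n))
    (p : Pairs n) : 0 ≤ mom0 q R R' p := by
  unfold mom0
  split_ifs
  · exact mul_nonneg hq0 (by linarith)
  · exact le_rfl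
  · exact zero_le_one

lemma mom1_nonneg {n : ℕ} {q lam : ℝ} (hq2 : q ≤ 1 / 2) (hlam : 0 < lam)
    (R R' : Finset (Pairs n)) (p : Pairs n) : 0 ≤ mom1 q lam R R' p := by
  unfold mom1
  split_ifs
  · exact mul_nonneg hlam.le (by linarith)
  · exact hlam.le
  · exact le_rfl

lemma agree_nonneg {n K : ℕ} (z : Lab n K) (p : Pairs n) : 0 ≤ agree z p := by
  unfold agree; split_ifs <;> norm_num

lemma agree_mul_self {n K : ℕ} (z : Lab n K) (p : Pairs n) : agree z p * agree z p = agree z p := by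
  unfold agree; split_ifs <;> norm_num

lemma labAvg_mono {n K : ℕ} {f g : Lab n K → ℝ} (h : ∀ z, f z ≤ g z) :
    labAvg n K f ≤ labAvg n K g := by
  unfold labAvg
  exact mul_le_mul_of_nonneg_left (Finset.sum_le_sum fun z _ => h z) (by positivity)

lemma labAvg_nonneg {n K : ℕ} {f : Lab n K → ℝ} (h : ∀ z, 0 ≤ f z) : 0 ≤ labAvg n K f :=
  mul_nonneg (by positivity) (Finset.sum_nonneg fun z _ => h z)

lemma labAvg_mul_left {n K : ℕ} (c : ℝ) (f : Lab n K → ℝ) :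
    labAvg n K (fun z => c * f z) = c * labAvg n K f := by
  unfold labAvg
  rw [← Finset.mul_sum]; ring

lemma labAvg_sum {n K : ℕ} {ι : Type*} (s : Finset ι) (f : ι → Lab n K → ℝ) :
    labAvg n K (fun z => ∑ i ∈ s, f i z) = ∑ i ∈ s, labAvg n K (f i) := by
  unfold labAvg
  rw [Finset.sum_comm, Finset.mul_sum]

/-! ### Positive correlation of agreement events -/

/-- The labelings constant along every pair of `X`: a subgroup of `(ℤ/K)^n`. -/
def agreeSubgroup (n K : ℕ) [NeZero K] (X : Finset (Pairs n)) : AddSubgroup (Lab n K) where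
  carrier := {z | ∀ p ∈ X, z p.1.1 = z p.1.2}
  add_mem' := by
    intro a b ha hb p hp
    simp only [Pi.add_apply, ha p hp, hb p hp]
  zero_mem' := by intro p _; rfl
  neg_mem' := by
    intro a ha p hp
    simp only [Pi.neg_apply, ha p hp]

lemma sum_prod_agree (n K : ℕ) [NeZero K] (X : Finset (Pairs n)) :
    ∑ z : Lab n K, ∏ p ∈ X, agree z p = (Nat.card (agreeSubgroup n K X) : ℝ) := by
  have h : ∀ z : Lab n K, ∏ p ∈ X, agree z p = if z ∈ agreeSubgroup n K X then 1 else 0 := by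
    intro z
    split_ifs with hz
    · exact Finset.prod_eq_one fun p hp => if_pos (hz p hp)
    · have : ∃ p ∈ X, z p.1.1 ≠ z p.1.2 := by
        by_contra hcon
        push Not at hcon
        exact hz hcon
      obtain ⟨p, hp, hne⟩ := this
      exact Finset.prod_eq_zero hp (if_neg hne)
  simp_rw [h]
  rw [Finset.sum_boole, Nat.card_eq_fintype_card, Fintype.card_subtype]

/-- The index of an intersection of two subgroups is at most the product of the indices. -/
lemma labAvg_agree_mul_le (n K : ℕ) [NeZero K] (X Y : Finset (Pairs n)) :
    labAvg n K (fun z => ∏ p ∈ X, agree z p) * labAvg n K (fun z => ∏ p ∈ Y, agree z p) ≤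
      labAvg n K (fun z => (∏ p ∈ X, agree z p) * ∏ p ∈ Y, agree z p) := by
  have hXY : ∀ z : Lab n K, (∏ p ∈ X, agree z p) * ∏ p ∈ Y, agree z p =
      ∏ p ∈ X ∪ Y, agree z p := by
    intro z
    have h2 : ∏ p ∈ X ∩ Y, agree z p = (∏ p ∈ X ∩ Y, agree z p) * ∏ p ∈ X ∩ Y, agree z p := by
      rw [← Finset.prod_mul_distrib]
      simp_rw [agree_mul_self]
    rw [← Finset.prod_union_inter, ← Finset.sdiff_union_of_subset
      (Finset.inter_subset_left.trans Finset.subset_union_left : X ∩ Y ⊆ X ∪ Y),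
      Finset.prod_union Finset.sdiff_disjoint, mul_assoc, ← h2]
  simp_rw [hXY]
  simp only [labAvg, sum_prod_agree]
  have hinf : agreeSubgroup n K (X ∪ Y) = agreeSubgroup n K X ⊓ agreeSubgroup n K Y := by
    ext z
    simp only [AddSubgroup.mem_inf]
    constructor
    · intro h
      exact ⟨fun p hp => h p (Finset.mem_union_left _ hp),
        fun p hp => h p (Finset.mem_union_right _ hp)⟩
    · rintro ⟨h1, h2⟩ p hp
      rcases Finset.mem_union.1 hp with h | h
      exacts [h1 p h, h2 p h]
  have hG : (Nat.card (Lab n K) : ℝ) = (K : ℝ) ^ n := by simp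
  have hle : (((agreeSubgroup n K (X ∪ Y)).index : ℕ) : ℝ) ≤
      (agreeSubgroup n K X).index * (agreeSubgroup n K Y).index := by
    rw [hinf]
    exact_mod_cast AddSubgroup.index_inf_le
  have hx : (Nat.card (agreeSubgroup n K X) : ℝ) * (agreeSubgroup n K X).index = (K : ℝ) ^ n := by
    rw [← hG]; exact_mod_cast AddSubgroup.card_mul_index _
  have hy : (Nat.card (agreeSubgroup n K Y) : ℝ) * (agreeSubgroup n K Y).index = (K : ℝ) ^ n := by
    rw [← hG]; exact_mod_cast AddSubgroup.card_mul_index _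
  have hxy : (Nat.card (agreeSubgroup n K (X ∪ Y)) : ℝ) * (agreeSubgroup n K (X ∪ Y)).index =
      (K : ℝ) ^ n := by
    rw [← hG]; exact_mod_cast AddSubgroup.card_mul_index _
  have hK : (0 : ℝ) < (K : ℝ) ^ n := by
    have : (0 : ℝ) < K := by exact_mod_cast NeZero.pos K
    positivity
  rw [inv_pow]
  generalize (K : ℝ) ^ n = N at *
  generalize (Nat.card (agreeSubgroup n K X) : ℝ) = a at *
  generalize (Nat.card (agreeSubgroup n K Y) : ℝ) = b at *
  have hc0 : (0 : ℝ) ≤ Nat.card (agreeSubgroup n K (X ∪ Y)) := Nat.cast_nonneg _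
  have hi : (0 : ℝ) ≤ (agreeSubgroup n K X).index := Nat.cast_nonneg _
  have hj : (0 : ℝ) ≤ (agreeSubgroup n K Y).index := Nat.cast_nonneg _
  generalize (Nat.card (agreeSubgroup n K (X ∪ Y)) : ℝ) = c at *
  generalize ((agreeSubgroup n K X).index : ℝ) = i at *
  generalize ((agreeSubgroup n K Y).index : ℝ) = j at *
  generalize ((agreeSubgroup n K (X ∪ Y)).index : ℝ) = k at *
  have hi' : 0 < i := lt_of_le_of_ne hi fun h => by rw [← h] at hx; linarith
  have hj' : 0 < j := lt_of_le_of_ne hj fun h => by rw [← h] at hy; linarith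
  -- `a * b = N² / (i j)` and `c = N / k ≥ N / (i j)`
  have hab : a * b * (i * j) = N * N := by rw [← hx]; nth_rw 2 [hx]; rw [← hy]; ring
  have hck : N ≤ c * (i * j) := by rw [← hxy]; exact mul_le_mul_of_nonneg_left hle hc0
  have key : a * b ≤ N * c := by
    have : a * b * (i * j) ≤ N * c * (i * j) := by
      rw [hab, mul_assoc]; exact mul_le_mul_of_nonneg_left hck hK.le
    exact le_of_mul_le_mul_right this (mul_pos hi' hj')
  calc N⁻¹ * a * (N⁻¹ * b) = N⁻¹ * N⁻¹ * (a * b) := by ring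
    _ ≤ N⁻¹ * N⁻¹ * (N * c) := mul_le_mul_of_nonneg_left key (by positivity)
    _ = N⁻¹ * c := by field_simp

/-- Products of affine functions of the agreement indicators with nonnegative coefficients are
positively correlated: expand both products and apply `labAvg_agree_mul_le` termwise. -/
lemma labAvg_affine_mul_le (n K : ℕ) [NeZero K] (a b c d : Pairs n → ℝ)
    (ha : ∀ p, 0 ≤ a p) (hb : ∀ p, 0 ≤ b p) (hc : ∀ p, 0 ≤ c p) (hd : ∀ p, 0 ≤ d p) :
    labAvg n K (fun z => ∏ p, (a p + b p * agree z p)) *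
        labAvg n K (fun z => ∏ p, (c p + d p * agree z p)) ≤
      labAvg n K (fun z => (∏ p, (a p + b p * agree z p)) * ∏ p, (c p + d p * agree z p)) := by
  have expand : ∀ (a b : Pairs n → ℝ) (z : Lab n K), ∏ p, (a p + b p * agree z p) =
      ∑ X ∈ Finset.univ.powerset, ((∏ p ∈ X, b p) * ∏ p ∈ Finset.univ \ X, a p) *
        ∏ p ∈ X, agree z p := by
    intro a b z
    simp_rw [add_comm (a _)]
    rw [Finset.prod_add]
    refine Finset.sum_congr rfl fun X _ => ?_
    rw [Finset.prod_mul_distrib]; ring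
  simp_rw [expand a b, expand c d, Finset.sum_mul_sum, labAvg_sum]
  rw [Finset.sum_mul_sum]
  refine Finset.sum_le_sum fun X _ => Finset.sum_le_sum fun Y _ => ?_
  have hA : 0 ≤ (∏ p ∈ X, b p) * ∏ p ∈ Finset.univ \ X, a p :=
    mul_nonneg (Finset.prod_nonneg fun p _ => hb p) (Finset.prod_nonneg fun p _ => ha p)
  have hB : 0 ≤ (∏ p ∈ Y, d p) * ∏ p ∈ Finset.univ \ Y, c p :=
    mul_nonneg (Finset.prod_nonneg fun p _ => hd p) (Finset.prod_nonneg fun p _ => hc p)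
  generalize (∏ p ∈ X, b p) * ∏ p ∈ Finset.univ \ X, a p = A at *
  generalize (∏ p ∈ Y, d p) * ∏ p ∈ Finset.univ \ Y, c p = B at *
  have h3 : ∀ z : Lab n K, A * (∏ p ∈ X, agree z p) * (B * ∏ p ∈ Y, agree z p) =
      A * B * ((∏ p ∈ X, agree z p) * ∏ p ∈ Y, agree z p) := fun z => by ring
  simp_rw [h3, labAvg_mul_left]
  calc _ = A * B * (labAvg n K (fun z => ∏ p ∈ X, agree z p) *
        labAvg n K (fun z => ∏ p ∈ Y, agree z p)) := by ring
    _ ≤ _ := mul_le_mul_of_nonneg_left (labAvg_agree_mul_le n K X Y) (mul_nonneg hA hB)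

/-- Comparison for edge sets `H = R ⊔ S` and `H' = R' ⊔ S'`: each pair of `H ∩ H'` belonging to
`S ∪ S'` contributes a factor `lam`, because `lam² ≤ lam * (q(1-q) + lam(1-2q))`. -/
lemma labAvg_mom_le (n K : ℕ) [NeZero K] {q lam : ℝ} (hq0 : 0 ≤ q) (hq2 : q ≤ 1 / 2)
    (hql : q + 2 * lam ≤ 1) (hlam : 0 < lam) (R S R' S' : Finset (Pairs n))
    (hRS : Disjoint R S) (hRS' : Disjoint R' S') :
    labAvg n K (fun z => ∏ p, mom q lam R R' z p) * labAvg n K (fun z => ∏ p, mom q lam S ∅ z p) *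
        labAvg n K (fun z => ∏ p, mom q lam S' ∅ z p) ≤
      lam ^ ((R ∪ S) ∩ (R' ∪ S') ∩ (S ∪ S')).card *
        labAvg n K (fun z => ∏ p, mom q lam (R ∪ S) (R' ∪ S') z p) := by
  have h0 := fun (A B : Finset (Pairs n)) => mom0_nonneg hq0 hq2 A B
  have h1 := fun (A B : Finset (Pairs n)) => mom1_nonneg hq2 hlam A B
  have hnn : ∀ (A B : Finset (Pairs n)) (z : Lab n K) p, 0 ≤ mom q lam A B z p := fun A B z p =>
    add_nonneg (h0 A B p) (mul_nonneg (h1 A B p) (agree_nonneg z p))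
  have step1 : labAvg n K (fun z => ∏ p, mom q lam R R' z p) *
      labAvg n K (fun z => ∏ p, mom q lam S ∅ z p) ≤
      labAvg n K (fun z => (∏ p, mom q lam R R' z p) * ∏ p, mom q lam S ∅ z p) :=
    labAvg_affine_mul_le n K _ _ _ _ (h0 R R') (h1 R R') (h0 S ∅) (h1 S ∅)
  have hprod : ∀ z : Lab n K, (∏ p, mom q lam R R' z p) * ∏ p, mom q lam S ∅ z p =
      ∏ p, (mom0 q R R' p * mom0 q S ∅ p + (mom0 q R R' p * mom1 q lam S ∅ p +
        mom1 q lam R R' p * mom0 q S ∅ p + mom1 q lam R R' p * mom1 q lam S ∅ p) *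
          agree z p) := by
    intro z
    rw [← Finset.prod_mul_distrib]
    refine Finset.prod_congr rfl fun p _ => ?_
    simp only [mom]
    linear_combination (mom1 q lam R R' p * mom1 q lam S ∅ p) * agree_mul_self z p
  have step2 : labAvg n K (fun z => (∏ p, mom q lam R R' z p) * ∏ p, mom q lam S ∅ z p) *
      labAvg n K (fun z => ∏ p, mom q lam S' ∅ z p) ≤
      labAvg n K (fun z => ((∏ p, mom q lam R R' z p) * ∏ p, mom q lam S ∅ z p) *
        ∏ p, mom q lam S' ∅ z p) := by
    simp_rw [hprod]
    refine labAvg_affine_mul_le n K _ _ _ _ (fun p => ?_) (fun p => ?_) (h0 S' ∅) (h1 S' ∅)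
    · exact mul_nonneg (h0 R R' p) (h0 S ∅ p)
    · have e1 := h0 R R' p
      have e2 := h0 S ∅ p
      have e3 := h1 R R' p
      have e4 := h1 S ∅ p
      positivity
  refine (mul_le_mul_of_nonneg_right step1
    (labAvg_nonneg fun z => Finset.prod_nonneg fun p _ => hnn _ _ z p)).trans (step2.trans ?_)
  rw [← labAvg_mul_left]
  refine labAvg_mono fun z => ?_
  have hpow : lam ^ ((R ∪ S) ∩ (R' ∪ S') ∩ (S ∪ S')).card =
      ∏ p : Pairs n, if p ∈ (R ∪ S) ∩ (R' ∪ S') ∩ (S ∪ S') then lam else 1 := by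
    rw [Finset.prod_ite_mem, Finset.univ_inter, Finset.prod_const]
  rw [hpow, ← Finset.prod_mul_distrib, ← Finset.prod_mul_distrib, ← Finset.prod_mul_distrib]
  refine Finset.prod_le_prod
    (fun p _ => mul_nonneg (mul_nonneg (hnn _ _ z p) (hnn _ _ z p)) (hnn _ _ z p)) fun p _ => ?_
  have d1 : p ∈ R → p ∉ S := fun ha hb => Finset.disjoint_left.1 hRS ha hb
  have d2 : p ∈ R' → p ∉ S' := fun ha hb => Finset.disjoint_left.1 hRS' ha hb
  -- the two bounds used on a pair of `H ∩ H'` meeting `S ∪ S'`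
  have hv : lam ≤ q * (1 - q) + lam * (1 - 2 * q) := by nlinarith
  have hv' := mul_le_mul_of_nonneg_left hv hlam.le
  have hv0 : 0 ≤ lam * (q * (1 - q)) := mul_nonneg hlam.le (mul_nonneg hq0 (by linarith))
  simp only [mom, mom0, mom1, agree, Finset.mem_union, Finset.mem_inter, Finset.notMem_empty]
  by_cases hz : z p.1.1 = z p.1.2 <;> by_cases a1 : p ∈ R <;> by_cases a2 : p ∈ S <;>
    by_cases a3 : p ∈ R' <;> by_cases a4 : p ∈ S' <;>
    first
      | exact absurd a2 (d1 a1)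
      | exact absurd a4 (d2 a3)
      | (simp [hz, a1, a2, a3, a4]; done)
      | (simp [hz, a1, a2, a3, a4]; linarith)

/-! ### Edge sets of labeled templates -/

/-- The pairs of `Fin n` that are images under `π` of the edges in `F`. -/
def edgeImg {n : ℕ} (T : Template) (π : Fin T.v ↪ Fin n) (F : Finset (Fin T.v × Fin T.v)) :
    Finset (Pairs n) :=
  Finset.univ.filter fun p => ∃ e ∈ F, s(p.1.1, p.1.2) = s(π e.1, π e.2)

lemma edge_unique {n : ℕ} (T : Template) (π : Fin T.v ↪ Fin n) {e e' : Fin T.v × Fin T.v}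
    (he : e ∈ T.E) (he' : e' ∈ T.E) (h : s(π e.1, π e.2) = s(π e'.1, π e'.2)) : e = e' := by
  have l1 := T.hE e he
  have l2 := T.hE e' he'
  rcases Sym2.eq_iff.1 h with ⟨h1, h2⟩ | ⟨h1, h2⟩
  · exact Prod.ext (π.injective h1) (π.injective h2)
  · have h1 := π.injective h1
    have h2 := π.injective h2
    rw [h1, h2] at l1
    exact absurd l1 (not_lt_of_gt l2)

lemma edgeImg_union {n : ℕ} (T : Template) (π : Fin T.v ↪ Fin n)
    (F F' : Finset (Fin T.v × Fin T.v)) :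
    edgeImg T π (F ∪ F') = edgeImg T π F ∪ edgeImg T π F' := by
  ext p
  simp only [edgeImg, Finset.mem_filter, Finset.mem_univ, true_and, Finset.mem_union]
  constructor
  · rintro ⟨e, h | h, he⟩
    exacts [Or.inl ⟨e, h, he⟩, Or.inr ⟨e, h, he⟩]
  · rintro (⟨e, h, he⟩ | ⟨e, h, he⟩)
    exacts [⟨e, Or.inl h, he⟩, ⟨e, Or.inr h, he⟩]

lemma edgeImg_disjoint {n : ℕ} (T : Template) (π : Fin T.v ↪ Fin n)
    {F F' : Finset (Fin T.v × Fin T.v)} (hF : F ⊆ T.E) (hF' : F' ⊆ T.E) (h : Disjoint F F') :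
    Disjoint (edgeImg T π F) (edgeImg T π F') := by
  rw [Finset.disjoint_left]
  intro p hp hp'
  simp only [edgeImg, Finset.mem_filter, Finset.mem_univ, true_and] at hp hp'
  obtain ⟨e, he, h1⟩ := hp
  obtain ⟨e', he', h2⟩ := hp'
  obtain rfl := edge_unique T π (hF he) (hF' he') (h1.symm.trans h2)
  exact Finset.disjoint_left.1 h he he'

/-- The pair of `Fin n` with the given two distinct endpoints. -/
def mkPair {n : ℕ} (i j : Fin n) (h : i ≠ j) : Pairs n := ⟨(min i j, max i j), min_lt_max.mpr h⟩

lemma mkPair_sym2 {n : ℕ} (i j : Fin n) (h : i ≠ j) :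
    s((mkPair i j h).1.1, (mkPair i j h).1.2) = s(i, j) := by
  simp only [mkPair]
  rcases le_total i j with h' | h'
  · rw [min_eq_left h', max_eq_right h']
  · rw [min_eq_right h', max_eq_left h', Sym2.eq_swap]

lemma pairs_ext {n : ℕ} {p p' : Pairs n} (h : s(p.1.1, p.1.2) = s(p'.1.1, p'.1.2)) : p = p' := by
  rcases Sym2.eq_iff.1 h with ⟨h1, h2⟩ | ⟨h1, h2⟩
  · exact Subtype.ext (Prod.ext h1 h2)
  · have l1 := p.2
    have l2 := p'.2
    rw [h1, h2] at l1
    exact absurd l1 (not_lt_of_gt l2)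

lemma prod_Ymat {n : ℕ} (q : ℝ) (T : Template) (π : Fin T.v ↪ Fin n)
    {F : Finset (Fin T.v × Fin T.v)} (hF : F ⊆ T.E) (y : EdgeConf n) :
    ∏ e ∈ F, Ymat n q y (π e.1) (π e.2) = ∏ p ∈ edgeImg T π F, Ypair q y p := by
  have hne : ∀ e ∈ F, π e.1 ≠ π e.2 := fun e he h =>
    absurd (π.injective h) (T.hE e (hF he)).ne
  refine Finset.prod_bij (fun e he => mkPair (π e.1) (π e.2) (hne e he)) ?_ ?_ ?_ ?_
  · intro e he
    simp only [edgeImg, Finset.mem_filter, Finset.mem_univ, true_and]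
    exact ⟨e, he, mkPair_sym2 _ _ _⟩
  · intro e he e' he' h
    refine edge_unique T π (hF he) (hF he') ?_
    rw [← mkPair_sym2 _ _ (hne e he), h, mkPair_sym2]
  · intro p hp
    simp only [edgeImg, Finset.mem_filter, Finset.mem_univ, true_and] at hp
    obtain ⟨e, he, h⟩ := hp
    exact ⟨e, he, pairs_ext ((mkPair_sym2 _ _ _).trans h.symm)⟩
  · intro e he
    simp only [Ymat, dif_neg (hne e he), Ypair, mkPair]
    rfl

/-! ### Connected components -/

lemma compRep_reachable (T : Template) (w : Fin T.v) : T.graph.Reachable w (compRep T w) := by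
  have := Finset.min'_mem (Finset.univ.filter fun u => T.graph.Reachable w u)
    ⟨w, by simp only [Finset.mem_filter, Finset.mem_univ, true_and]; exact SimpleGraph.Reachable.refl w⟩
  exact (Finset.mem_filter.1 this).2

lemma compRep_eq (T : Template) {w w' : Fin T.v} (h : T.graph.Reachable w w') :
    compRep T w = compRep T w' := by
  have : (Finset.univ.filter fun u => T.graph.Reachable w u) =
      Finset.univ.filter fun u => T.graph.Reachable w' u := by
    ext u
    simp only [Finset.mem_filter, Finset.mem_univ, true_and]
    exact ⟨fun hu => h.symm.trans hu, fun hu => h.trans hu⟩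
  unfold compRep
  congr 1

/-- The edges lying in the components whose representatives are in `S`. -/
def edgesOver (T : Template) (S : Finset (Fin T.v)) : Finset (Fin T.v × Fin T.v) :=
  T.E.filter fun e => compRep T e.1 ∈ S

lemma edgesOver_subset (T : Template) (S : Finset (Fin T.v)) : edgesOver T S ⊆ T.E :=
  Finset.filter_subset _ _

lemma prod_Pcomp {n : ℕ} (q : ℝ) (T : Template) (π : Fin T.v ↪ Fin n) {S : Finset (Fin T.v)}
    (hS : S ⊆ edgeCompReps T) (y : EdgeConf n) :
    ∏ w ∈ S, Pcomp n q T π w y = ∏ p ∈ edgeImg T π (edgesOver T S), Ypair q y p := by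
  rw [← prod_Ymat q T π (edgesOver_subset T S) y]
  rw [← Finset.prod_fiberwise_of_maps_to (s := edgesOver T S) (t := S)
    (g := fun e => compRep T e.1) fun e he => (Finset.mem_filter.1 he).2]
  refine Finset.prod_congr rfl fun w hw => ?_
  have hrep : compRep T w = w := (Finset.mem_filter.1 (hS hw)).2.1
  unfold Pcomp
  refine Finset.prod_congr ?_ fun _ _ => rfl
  ext e
  simp only [compEdges, edgesOver, Finset.mem_filter]
  constructor
  · rintro ⟨he, hr⟩
    have : compRep T e.1 = w := (compRep_eq T hr).trans hrep
    exact ⟨⟨he, this ▸ hw⟩, this⟩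
  · rintro ⟨⟨he, _⟩, hr⟩
    exact ⟨he, hr ▸ compRep_reachable T e.1⟩

lemma edgesOver_all (T : Template) (S : Finset (Fin T.v)) :
    edgesOver T (edgeCompReps T \ S) ∪ edgesOver T S = T.E := by
  ext e
  simp only [edgesOver, Finset.mem_union, Finset.mem_filter, Finset.mem_sdiff]
  constructor
  · rintro (h | h) <;> exact h.1
  · intro he
    by_cases h : compRep T e.1 ∈ S
    · exact Or.inr ⟨he, h⟩
    · refine Or.inl ⟨he, ?_, h⟩
      have hr := compRep_reachable T e.1
      exact Finset.mem_filter.2 ⟨Finset.mem_univ _, (compRep_eq T hr).symm, e, he, hr⟩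

lemma edgesOver_disjoint (T : Template) (S : Finset (Fin T.v)) :
    Disjoint (edgesOver T (edgeCompReps T \ S)) (edgesOver T S) := by
  rw [Finset.disjoint_left]
  intro e h h'
  exact (Finset.mem_sdiff.1 (Finset.mem_filter.1 h).2).2 (Finset.mem_filter.1 h').2

lemma adj_of_edge (T : Template) {e : Fin T.v × Fin T.v} (he : e ∈ T.E) :
    T.graph.Adj e.1 e.2 := by
  rw [Template.graph, SimpleGraph.fromRel_adj]
  exact ⟨(T.hE e he).ne, Or.inl he⟩

/-- A node of a component with an edge is incident to an edge of that component. -/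
lemma exists_incident_edge (T : Template) {S : Finset (Fin T.v)} (hS : S ⊆ edgeCompReps T)
    {w : Fin T.v} (hw : compRep T w ∈ S) :
    ∃ e ∈ edgesOver T S, e.1 = w ∨ e.2 = w := by
  obtain ⟨e, he, hr⟩ := (Finset.mem_filter.1 (hS hw)).2.2
  have hew : T.graph.Reachable w e.1 := (compRep_reachable T w).trans hr.symm
  have hadj : ∃ u, T.graph.Adj w u := by
    obtain ⟨walk⟩ := hew
    cases walk with
    | nil => exact ⟨_, adj_of_edge T he⟩
    | cons h _ => exact ⟨_, h⟩
  obtain ⟨u, hu⟩ := hadj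
  have hu' := hu
  rw [Template.graph, SimpleGraph.fromRel_adj] at hu'
  rcases hu'.2 with h | h
  · exact ⟨(w, u), Finset.mem_filter.2 ⟨h, hw⟩, Or.inl rfl⟩
  · exact ⟨(u, w), Finset.mem_filter.2 ⟨h, (compRep_eq T hu.reachable) ▸ hw⟩, Or.inr rfl⟩

lemma exists_pair {n : ℕ} (T : Template) (π : Fin T.v ↪ Fin n) {e : Fin T.v × Fin T.v}
    (he : e ∈ T.E) : ∃ p : Pairs n, s(p.1.1, p.1.2) = s(π e.1, π e.2) :=
  ⟨mkPair _ _ fun h => absurd (π.injective h) (T.hE e he).ne, mkPair_sym2 _ _ _⟩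

lemma mem_edgeImg {n : ℕ} {T : Template} {π : Fin T.v ↪ Fin n}
    {F : Finset (Fin T.v × Fin T.v)} {p : Pairs n} :
    p ∈ edgeImg T π F ↔ ∃ e ∈ F, s(p.1.1, p.1.2) = s(π e.1, π e.2) := by
  simp [edgeImg]

/-- Each perfectly matched pair of nodes touching a selected component is an endpoint of a
matched edge in a selected component, and an edge has two endpoints. -/
lemma card_perfect_le {n : ℕ} {T1 T2 : Template} {M : Finset (Fin T1.v × Fin T2.v)}
    {π1 : Fin T1.v ↪ Fin n} {π2 : Fin T2.v ↪ Fin n}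
    (hπ : ∀ a b, π1 a = π2 b ↔ (a, b) ∈ M)
    {S1 : Finset (Fin T1.v)} (hS1 : S1 ⊆ edgeCompReps T1)
    {S2 : Finset (Fin T2.v)} (hS2 : S2 ⊆ edgeCompReps T2) :
    ((MPM T1 T2 M ∩ Mminus T1 T2 M).filter fun p =>
        compRep T1 p.1 ∈ S1 ∨ compRep T2 p.2 ∈ S2).card ≤
      (edgeImg T1 π1 T1.E ∩ edgeImg T2 π2 T2.E ∩
        (edgeImg T1 π1 (edgesOver T1 S1) ∪ edgeImg T2 π2 (edgesOver T2 S2))).card * 2 := by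
  set N := edgeImg T1 π1 T1.E ∩ edgeImg T2 π2 T2.E ∩
        (edgeImg T1 π1 (edgesOver T1 S1) ∪ edgeImg T2 π2 (edgesOver T2 S2)) with hN
  refine le_trans (Finset.card_le_card_of_injOn (t := N.biUnion fun p => {p.1.1, p.1.2})
    (fun p => π1 p.1) ?_ ?_) (Finset.card_biUnion_le_card_mul _ _ 2 fun p _ => Finset.card_le_two)
  · rintro ⟨v, v'⟩ hp
    have hp := Finset.mem_coe.1 hp
    simp only [Finset.mem_filter, Finset.mem_inter, MPM] at hp
    obtain ⟨⟨⟨hM, hns⟩, _⟩, hsel⟩ := hp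
    have hvv : π1 v = π2 v' := (hπ v v').2 hM
    -- it suffices to produce an edge of `N` through the common image of `v` and `v'`
    suffices h : ∃ p ∈ N, π1 v ∈ s(p.1.1, p.1.2) by
      obtain ⟨p, hpN, hmem⟩ := h
      rw [Finset.mem_coe, Finset.mem_biUnion]
      exact ⟨p, hpN, by simpa using hmem⟩
    have hns1 : ∀ e ∈ T1.E, (e.1 = v ∨ e.2 = v) → EdgeMatched1 T1 T2 M e := fun e he hv => by
      by_contra hc
      exact hns (Or.inl ⟨e, he, hv, hc⟩)
    have hns2 : ∀ e ∈ T2.E, (e.1 = v' ∨ e.2 = v') → EdgeMatched2 T1 T2 M e := fun e he hv => by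
      by_contra hc
      exact hns (Or.inr ⟨e, he, hv, hc⟩)
    rcases hsel with hsel | hsel
    · obtain ⟨e, heS, hv⟩ := exists_incident_edge T1 hS1 hsel
      have he := edgesOver_subset _ _ heS
      obtain ⟨e', he', hee⟩ := hns1 e he hv
      obtain ⟨p, hp⟩ := exists_pair T1 π1 he
      have hs : s(π1 e.1, π1 e.2) = s(π2 e'.1, π2 e'.2) := by
        rw [Sym2.eq_iff]; simpa only [hπ] using hee
      refine ⟨p, ?_, ?_⟩
      · simp only [hN, Finset.mem_inter, Finset.mem_union, mem_edgeImg]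
        exact ⟨⟨⟨e, he, hp⟩, ⟨e', he', hp.trans hs⟩⟩, Or.inl ⟨e, heS, hp⟩⟩
      · rw [hp, Sym2.mem_iff]
        rcases hv with rfl | rfl
        exacts [Or.inl rfl, Or.inr rfl]
    · obtain ⟨e, heS, hv⟩ := exists_incident_edge T2 hS2 hsel
      have he := edgesOver_subset _ _ heS
      obtain ⟨e', he', hee⟩ := hns2 e he hv
      obtain ⟨p, hp⟩ := exists_pair T2 π2 he
      have hs : s(π1 e'.1, π1 e'.2) = s(π2 e.1, π2 e.2) := by
        rw [Sym2.eq_iff]; simpa only [hπ] using hee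
      refine ⟨p, ?_, ?_⟩
      · simp only [hN, Finset.mem_inter, Finset.mem_union, mem_edgeImg]
        exact ⟨⟨⟨e', he', hp.trans hs.symm⟩, ⟨e, he, hp⟩⟩, Or.inr ⟨e, heS, hp⟩⟩
      · rw [hp, hvv, Sym2.mem_iff]
        rcases hv with rfl | rfl
        exacts [Or.inl rfl, Or.inr rfl]
  · rintro ⟨v, v'⟩ hp ⟨u, u'⟩ hp' h
    have hp := Finset.mem_coe.1 hp
    have hp' := Finset.mem_coe.1 hp'
    simp only [Finset.mem_filter, Finset.mem_inter, MPM] at hp hp'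
    have e1 : π1 v = π2 v' := (hπ v v').2 hp.1.1.1
    have e2 : π1 u = π2 u' := (hπ u u').2 hp'.1.1.1
    have h : π1 v = π1 u := h
    exact Prod.ext (π1.injective h) (π2.injective (by rw [← e1, ← e2, h]))

theorem statement12 (n K : ℕ) (q lam : ℝ) (hn : 2 ≤ n) (hK : 2 ≤ K) (hKn : K ≤ n)
    (hq0 : 0 ≤ q) (hq2 : q ≤ 1 / 2) (hql : q + 2 * lam ≤ 1) (hlam : 0 < lam)
    (T1 T2 : Template)
    (M : Finset (Fin T1.v × Fin T2.v)) (hM : IsMatching T1 T2 M)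
    (π1 : Fin T1.v ↪ Fin n) (π2 : Fin T2.v ↪ Fin n)
    (hπ : (π1, π2) ∈ PiM n hn T1 T2 M)
    (S1 : Finset (Fin T1.v)) (hS1 : S1 ⊆ edgeCompReps T1)
    (S2 : Finset (Fin T2.v)) (hS2 : S2 ⊆ edgeCompReps T2) :
    0 ≤ expec n K q lam (fun _ y =>
          (∏ w ∈ edgeCompReps T1 \ S1, Pcomp n q T1 π1 w y) *
          ∏ w ∈ edgeCompReps T2 \ S2, Pcomp n q T2 π2 w y) *
        expec n K q lam (fun _ y => ∏ w ∈ S1, Pcomp n q T1 π1 w y) *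
        expec n K q lam (fun _ y => ∏ w ∈ S2, Pcomp n q T2 π2 w y) ∧
    expec n K q lam (fun _ y =>
          (∏ w ∈ edgeCompReps T1 \ S1, Pcomp n q T1 π1 w y) *
          ∏ w ∈ edgeCompReps T2 \ S2, Pcomp n q T2 π2 w y) *
        expec n K q lam (fun _ y => ∏ w ∈ S1, Pcomp n q T1 π1 w y) *
        expec n K q lam (fun _ y => ∏ w ∈ S2, Pcomp n q T2 π2 w y) ≤
      lam ^ (((((MPM T1 T2 M ∩ Mminus T1 T2 M).filter fun p =>
            compRep T1 p.1 ∈ S1 ∨ compRep T2 p.2 ∈ S2).card : ℕ) : ℝ) / 2) *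
        expec n K q lam (fun _ y => PG n q T1 π1 y * PG n q T2 π2 y) := by
  have : NeZero K := ⟨by omega⟩
  have hπ' := hπ.2.2
  have hPG : ∀ (T : Template) (π : Fin T.v ↪ Fin n) (y : EdgeConf n),
      PG n q T π y = ∏ p ∈ edgeImg T π T.E, Ypair q y p := fun T π y =>
    prod_Ymat q T π Finset.Subset.rfl y
  have hsingle : ∀ R : Finset (Pairs n), expec n K q lam (fun _ y => ∏ p ∈ R, Ypair q y p) =
      labAvg n K (fun z => ∏ p, mom q lam R ∅ z p) := fun R => by
    rw [← expec_prod]; simp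
  simp_rw [hPG, prod_Pcomp q T1 π1 (Finset.sdiff_subset (t := S1)), prod_Pcomp q T2 π2 (Finset.sdiff_subset (t := S2)), prod_Pcomp q T1 π1 hS1,
    prod_Pcomp q T2 π2 hS2, hsingle, expec_prod]
  have hnn : ∀ A B : Finset (Pairs n), 0 ≤ labAvg n K (fun z => ∏ p, mom q lam A B z p) :=
    fun A B => labAvg_nonneg fun z => Finset.prod_nonneg fun p _ =>
      add_nonneg (mom0_nonneg hq0 hq2 A B p)
        (mul_nonneg (mom1_nonneg hq2 hlam A B p) (agree_nonneg z p))
  refine ⟨mul_nonneg (mul_nonneg (hnn _ _) (hnn _ _)) (hnn _ _), ?_⟩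
  have hmain := labAvg_mom_le n K hq0 hq2 hql hlam
    (edgeImg T1 π1 (edgesOver T1 (edgeCompReps T1 \ S1))) (edgeImg T1 π1 (edgesOver T1 S1))
    (edgeImg T2 π2 (edgesOver T2 (edgeCompReps T2 \ S2))) (edgeImg T2 π2 (edgesOver T2 S2))
    (edgeImg_disjoint _ _ (edgesOver_subset _ _) (edgesOver_subset _ _) (edgesOver_disjoint _ _))
    (edgeImg_disjoint _ _ (edgesOver_subset _ _) (edgesOver_subset _ _) (edgesOver_disjoint _ _))
  rw [← edgeImg_union, ← edgeImg_union, edgesOver_all, edgesOver_all] at hmain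
  refine hmain.trans (mul_le_mul_of_nonneg_right ?_ (hnn _ _))
  rw [← Real.rpow_natCast]
  refine Real.rpow_le_rpow_of_exponent_ge hlam (by linarith) ?_
  rw [div_le_iff₀ (by norm_num : (0 : ℝ) < 2)]
  exact_mod_cast card_perfect_le hπ' hS1 hS2

end SBM
end
end

section
/- Let n ≥ 2, 2 ≤ K ≤ n, λ > 0, 0 < q < 1, q̄ := q(1−q), D ≥ 1, c_s > 0. Assume 2·D^{16c_s}·λ ≤ (λ/K + q̄)^{1 − log_n(K)} and log_n(K) ≥ 1/2, where log_n(K) := log K / log n. Then for every real r ≥ 1: min( (√n/K)·(λ/√q̄)^r , λ^{r/2}·√(n/K) ) ≤ D^{−8c_s·r}. -/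
/-!
Everything is linear after taking logarithms. Put `L = log n`, `a = log K / log n`, `b = 1 - a`,
`l = log lam`, `p = log (q (1 - q))` and `m = 16 cs log D ≥ 0`, with `1/2 ≤ a ≤ 1`. The second term
of the minimum is small exactly when `r (m + l) ≤ -b L`, and the first one exactly when
`(b - 1/2) L + r (l + m/2 - p/2) ≤ 0`. Bounding the sum `lam / K + q (1 - q)` by twice its larger
summand leaves two cases.

If `lam / K` dominates, the hypothesis becomes `log 2 + m + l ≤ b (log 2 + l - a L)`, which after
division by `a` gives `m + l ≤ -b L`, so the second term is small (`log_second_le`).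

If `q (1 - q)` dominates, the hypothesis gives `m + l ≤ b p`. When the second term is not small,
`-b L < r (m + l) ≤ b r p`, so `b > 0` and `-r p ≤ L`; then the first term is small because
`b ≤ 1/2` (`log_first_le`).
-/

/-- The case where `lam / K` dominates `q (1 - q)`, in logarithmic form (`t` stands for `log 2`). -/
lemma log_second_le {a l m L t r : ℝ} (ha : 1 / 2 ≤ a) (ha1 : a ≤ 1) (hL : 0 < L) (ht : 0 < t)
    (hm : 0 ≤ m) (hr : 1 ≤ r) (h : t + m + l ≤ (1 - a) * (t + (l - a * L))) :
    r * (m + l) ≤ -((1 - a) * L) := by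
  have h1 : a * (m + l + (1 - a) * L) ≤ 0 := by
    nlinarith [mul_nonneg (sub_nonneg.2 ha1) hm, mul_nonneg (by linarith : (0 : ℝ) ≤ a) ht.le]
  have h2 : m + l + (1 - a) * L ≤ 0 := by
    by_contra! hc
    have := mul_pos (by linarith : (0 : ℝ) < a) hc
    linarith
  have h3 : 0 ≤ (1 - a) * L := mul_nonneg (sub_nonneg.2 ha1) hL.le
  nlinarith [mul_nonneg (sub_nonneg.2 hr) (by linarith : 0 ≤ -(m + l))]

/-- The case where `q (1 - q)` dominates `lam / K` and the second term is not small, in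
logarithmic form (`t` stands for `log 2`). -/
lemma log_first_le {a l m p L t r : ℝ} (ha : 1 / 2 ≤ a) (ha1 : a ≤ 1) (ht : 0 < t)
    (hm : 0 ≤ m) (hr : 1 ≤ r) (h : t + m + l ≤ (1 - a) * (t + p))
    (hlt : -((1 - a) * L) < r * (m + l)) :
    1 / 2 * L - a * L + r * (l - p / 2) ≤ -(r * m / 2) := by
  have hml : m + l ≤ (1 - a) * p := by
    nlinarith [mul_nonneg (by linarith : (0 : ℝ) ≤ a) ht.le]
  have h1 : r * (m + l) ≤ r * ((1 - a) * p) := mul_le_mul_of_nonneg_left hml (by linarith)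
  have h2 : 0 < (1 - a) * (r * p + L) := by nlinarith
  have h3 : 0 < r * p + L := pos_of_mul_pos_right h2 (sub_nonneg.2 ha1)
  nlinarith [mul_nonneg (sub_nonneg.2 ha) h3.le, mul_nonneg (by linarith : (0 : ℝ) ≤ r) hm]

/-- Lemma on the signal condition: below the conjectured threshold, each term of the
low-degree signal condition is small. -/
theorem statement14 (n K D : ℕ) (q lam cs : ℝ)
    (hn : 2 ≤ n) (hK : 2 ≤ K) (hKn : K ≤ n)
    (hlam : 0 < lam) (hq0 : 0 < q) (hq1 : q < 1) (hD : 1 ≤ D) (hcs : 0 < cs)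
    (hcond : 2 * (D : ℝ) ^ (16 * cs) * lam ≤
      (lam / K + q * (1 - q)) ^ (1 - Real.log K / Real.log n))
    (hhalf : 1 / 2 ≤ Real.log K / Real.log n) :
    ∀ r : ℝ, 1 ≤ r →
      min (Real.sqrt n / K * (lam / Real.sqrt (q * (1 - q))) ^ r)
          (lam ^ (r / 2) * Real.sqrt ((n : ℝ) / K)) ≤
        (D : ℝ) ^ (-(8 * cs * r)) := by
  intro r hr
  have hn0 : (0 : ℝ) < n := by exact_mod_cast (by omega : 0 < n)
  have hK0 : (0 : ℝ) < K := by exact_mod_cast (by omega : 0 < K)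
  have hD0 : (0 : ℝ) < D := by exact_mod_cast (by omega : 0 < D)
  have hL : 0 < Real.log n := Real.log_pos (by exact_mod_cast (by omega : 1 < n))
  have hq : 0 < q * (1 - q) := mul_pos hq0 (by linarith)
  have hlK : 0 < lam / K := div_pos hlam hK0
  have ht : 0 < Real.log 2 := Real.log_pos (by norm_num)
  have hm : 0 ≤ 16 * cs * Real.log D :=
    mul_nonneg (by linarith) (Real.log_nonneg (by exact_mod_cast hD))
  set a := Real.log K / Real.log n with ha_def
  have hlogK : Real.log K = a * Real.log n := by
    rw [ha_def]; field_simp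
  have ha1 : a ≤ 1 :=
    (div_le_one hL).2 (Real.log_le_log hK0 (by exact_mod_cast hKn))
  have hcond_log : Real.log 2 + 16 * cs * Real.log D + Real.log lam ≤
      (1 - a) * Real.log (lam / K + q * (1 - q)) := by
    have h := Real.log_le_log (by positivity) hcond
    rwa [Real.log_mul (by positivity) hlam.ne', Real.log_mul (by norm_num) (by positivity),
      Real.log_rpow hD0, Real.log_rpow (by positivity)] at h
  have hsqrt : ∀ x : ℝ, 0 < x → Real.log (Real.sqrt x) = Real.log x / 2 :=
    fun x hx => Real.log_sqrt hx.le
  have hlog_first : Real.log (Real.sqrt n / K * (lam / Real.sqrt (q * (1 - q))) ^ r) =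
      1 / 2 * Real.log n - a * Real.log n + r * (Real.log lam - Real.log (q * (1 - q)) / 2) := by
    have hs1 := Real.sqrt_pos.2 hn0
    have hs2 := Real.sqrt_pos.2 hq
    rw [Real.log_mul (by positivity) (by positivity), Real.log_div hs1.ne' hK0.ne',
      Real.log_rpow (by positivity), Real.log_div hlam.ne' hs2.ne', hsqrt _ hn0, hsqrt _ hq,
      hlogK]
    ring
  have hlog_second : Real.log (lam ^ (r / 2) * Real.sqrt ((n : ℝ) / K)) =
      r / 2 * Real.log lam + (1 - a) * Real.log n / 2 := by
    have hs := Real.sqrt_pos.2 (div_pos hn0 hK0)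
    rw [Real.log_mul (by positivity) hs.ne', Real.log_rpow hlam, hsqrt _ (div_pos hn0 hK0),
      Real.log_div hn0.ne' hK0.ne', hlogK]
    ring
  have hlog_rhs : Real.log ((D : ℝ) ^ (-(8 * cs * r))) = -(r * (16 * cs * Real.log D) / 2) := by
    rw [Real.log_rpow hD0]; ring
  have hrhs : 0 < (D : ℝ) ^ (-(8 * cs * r)) := by positivity
  by_cases hsecond : r * (16 * cs * Real.log D + Real.log lam) ≤ -((1 - a) * Real.log n)
  · refine (min_le_right _ _).trans ?_
    have hs := Real.sqrt_pos.2 (div_pos hn0 hK0)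
    rw [← Real.log_le_log_iff (by positivity) hrhs, hlog_second, hlog_rhs]
    linarith
  · refine (min_le_left _ _).trans ?_
    have hs1 := Real.sqrt_pos.2 hn0
    have hs2 := Real.sqrt_pos.2 hq
    rw [← Real.log_le_log_iff (by positivity) hrhs, hlog_first, hlog_rhs]
    rcases le_total (q * (1 - q)) (lam / K) with hle | hle
    · refine absurd (log_second_le hhalf ha1 hL ht hm hr (hcond_log.trans ?_)) hsecond
      refine mul_le_mul_of_nonneg_left ?_ (sub_nonneg.2 ha1)
      rw [← hlogK, ← Real.log_div hlam.ne' hK0.ne', ← Real.log_mul (by norm_num) hlK.ne']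
      exact Real.log_le_log (by positivity) (by linarith)
    · refine log_first_le hhalf ha1 ht hm hr (hcond_log.trans ?_) (not_le.1 hsecond)
      refine mul_le_mul_of_nonneg_left ?_ (sub_nonneg.2 ha1)
      rw [← Real.log_mul (by norm_num) hq.ne']
      exact Real.log_le_log (by positivity) (by linarith)
end

section
/- In the SBM, for any template G = (V,E) and any labeling π ∈ Π_V: E[P_{G,π}] = λ^{|E|} · K^{−(|V| − #CC(G))}, where #CC(G) is the number of connected components of G (isolated nodes counting as components). -/
/-!
Conditionally on the labels `z` the edges are independent and `E[Y_{ij} | z] = λ 1{z_i = z_j}`.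
Since `π` is injective, the edges of the template occupy distinct slots of the host graph, so
`E[P_{G,π} | z] = ∏_{(u,w) ∈ E} λ 1{z_{π u} = z_{π w}}` (`cond_expec`). This is `λ^|E|` when `z ∘ π`
is constant on the connected components of `G`, and `0` otherwise. Among the `K^n` labellings,
the former condition holds for `K^(n - |V|) * K^#CC(G)` of them: the labels outside the range of
`π` are free (`sum_comp_embedding`), and those inside amount to one label for each component
(`card_compat`).
-/

open Classical Finset

noncomputable section

namespace SBM

/-- Labels that agree along the edges of `G` are the same as labels of its components. -/
def compEquiv {V α : Type*} (G : SimpleGraph V) :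
    {x : V → α // ∀ a b, G.Adj a b → x a = x b} ≃ (G.ConnectedComponent → α) where
  toFun x := fun c => c.lift x.1 (by
    intro v w p _
    induction p with
    | nil => rfl
    | cons h _ ih =>
      rename_i hp
      exact (x.2 _ _ h).trans (ih (SimpleGraph.Walk.IsPath.of_cons hp)))
  invFun f := ⟨fun a => f (G.connectedComponentMk a), fun a b h =>
    congrArg f (SimpleGraph.ConnectedComponent.sound h.reachable)⟩
  left_inv x := by ext a; rfl
  right_inv f := by
    funext c
    induction c using SimpleGraph.ConnectedComponent.ind with
    | _ v => rfl

lemma card_compat {V α : Type*} [Fintype V] [Fintype α] (G : SimpleGraph V) :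
    Fintype.card {x : V → α // ∀ a b, G.Adj a b → x a = x b} =
      Fintype.card α ^ Nat.card G.ConnectedComponent := by
  rw [Fintype.card_congr (compEquiv G), Fintype.card_fun, Nat.card_eq_fintype_card]

lemma graph_compat_iff {α : Type*} (T : Template) (x : Fin T.v → α) :
    (∀ a b, T.graph.Adj a b → x a = x b) ↔ ∀ e ∈ T.E, x e.1 = x e.2 := by
  constructor
  · intro h e he
    exact h _ _ ((SimpleGraph.fromRel_adj _ _ _).2 ⟨(T.hE e he).ne, Or.inl he⟩)
  · intro h a b hab
    obtain ⟨_, h1 | h1⟩ := (SimpleGraph.fromRel_adj _ _ _).1 hab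
    · exact h _ h1
    · exact (h _ h1).symm

/-- Summing over the labels of all `n` nodes a function of the labels of the `v` nodes in the
range of `π`: the other `n - v` labels are free. -/
lemma sum_comp_embedding {n K v : ℕ} (π : Fin v ↪ Fin n) (F : (Fin v → Fin K) → ℝ) :
    ∑ z : Lab n K, F (fun a => z (π a)) = (K : ℝ) ^ (n - v) * ∑ x, F x := by
  let e : Fin v ⊕ ↥(Set.range π)ᶜ ≃ Fin n :=
    ((Equiv.ofInjective π π.injective).sumCongr (Equiv.refl _)).trans
      (Equiv.Set.sumCompl (Set.range π))
  let E : Lab n K ≃ (Fin v → Fin K) × (↥(Set.range π)ᶜ → Fin K) :=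
    (e.symm.arrowCongr (Equiv.refl _)).trans (Equiv.sumArrowEquivProdArrow _ _ _)
  have hc : Fintype.card ↥(Set.range π)ᶜ = n - v := by
    have := Fintype.card_congr e
    rw [Fintype.card_sum, Fintype.card_fin, Fintype.card_fin] at this
    omega
  calc ∑ z : Lab n K, F (fun a => z (π a)) = ∑ z : Lab n K, F (E z).1 := rfl
    _ = ∑ w : (Fin v → Fin K) × (↥(Set.range π)ᶜ → Fin K), F w.1 :=
        Equiv.sum_comp E (fun w => F w.1)
    _ = _ := by
        rw [Fintype.sum_prod_type_right]
        simp [hc]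

/-- The slots of the host graph occupied by the edges of the template under `π`. -/
def slots {n : ℕ} (T : Template) (π : Fin T.v ↪ Fin n) : Finset (Pairs n) :=
  Finset.univ.filter fun p => ∃ e ∈ T.E, s(π e.1, π e.2) = s(p.1.1, p.1.2)

/-- Distinct edges of the template occupy distinct slots, because `π` is injective, so a product
over edges is a product over occupied slots. -/
lemma prod_edges_eq {n : ℕ} (T : Template) (π : Fin T.v ↪ Fin n)
    (f : Fin T.v × Fin T.v → ℝ) (h : Pairs n → ℝ)
    (hf : ∀ e ∈ T.E, ∀ hne : π e.1 ≠ π e.2,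
      f e = h ⟨(min (π e.1) (π e.2), max (π e.1) (π e.2)), min_lt_max.mpr hne⟩) :
    ∏ e ∈ T.E, f e = ∏ p ∈ slots T π, h p := by
  have hne : ∀ e ∈ T.E, π e.1 ≠ π e.2 := fun e he =>
    fun h => (T.hE e he).ne (π.injective h)
  have hs : ∀ a b : Fin n, s(a, b) = s(min a b, max a b) := by
    intro a b
    rcases le_total a b with h | h <;> simp [h, Sym2.eq_swap]
  refine Finset.prod_bij (fun e he => ⟨(min (π e.1) (π e.2), max (π e.1) (π e.2)),
    min_lt_max.mpr (hne e he)⟩) ?_ ?_ ?_ ?_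
  · intro e he
    simp only [slots, Finset.mem_filter, Finset.mem_univ, true_and]
    exact ⟨e, he, hs _ _⟩
  · intro e he e' he' heq
    have h1 := congrArg (fun p : Pairs n => s(p.1.1, p.1.2)) heq
    simp only [← hs] at h1
    rcases Sym2.eq_iff.1 h1 with ⟨h2, h3⟩ | ⟨h2, h3⟩
    · exact Prod.ext (π.injective h2) (π.injective h3)
    · have a := T.hE e he
      have b := T.hE e' he'
      rw [π.injective h2, π.injective h3] at a
      exact absurd a b.asymm
  · intro p hp
    simp only [slots, Finset.mem_filter, Finset.mem_univ, true_and] at hp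
    obtain ⟨e, he, h1⟩ := hp
    refine ⟨e, he, Subtype.ext ?_⟩
    have hp := p.2
    rcases Sym2.eq_iff.1 h1 with ⟨h2, h3⟩ | ⟨h2, h3⟩
    · simp [h2, h3, hp.le]
    · simp [h2, h3, hp.le]
  · intro e he
    exact hf e he (hne e he)

/-- Conditionally on the labels, `E[Y_p | z] = λ 1{z_i = z_j}` for each pair `p = (i, j)`, and the
expectation of the monomial factorizes over pairs by independence. -/
lemma cond_expec (n K : ℕ) (q lam : ℝ) (T : Template) (π : Fin T.v ↪ Fin n) (z : Lab n K) :
    ∑ y : EdgeConf n, wt n K q lam z y * PG n q T π y =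
      ((K : ℝ)⁻¹) ^ n * ∏ e ∈ T.E, if z (π e.1) = z (π e.2) then lam else 0 := by
  have h1 : ∀ y, PG n q T π y = ∏ p : Pairs n,
      if p ∈ slots T π then (if y p then (1 : ℝ) else 0) - q else 1 := by
    intro y
    rw [Finset.prod_ite_mem, Finset.univ_inter]
    refine prod_edges_eq T π _ _ ?_
    intro e _ hne
    simp [Ymat, hne]
  have h2 : (∏ e ∈ T.E, if z (π e.1) = z (π e.2) then lam else 0) =
      ∏ p : Pairs n, if p ∈ slots T π then (if z p.1.1 = z p.1.2 then lam else 0) else 1 := by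
    rw [Finset.prod_ite_mem, Finset.univ_inter]
    refine prod_edges_eq T π _ _ ?_
    intro e _ hne
    rcases le_total (π e.1) (π e.2) with h | h <;> simp [h, eq_comm]
  have h3 : ∀ p : Pairs n,
      (if p ∈ slots T π then (if z p.1.1 = z p.1.2 then lam else 0) else 1) =
      ∑ b : Bool, (if b then pEdge n K q lam z p else 1 - pEdge n K q lam z p) *
        (if p ∈ slots T π then (if b then (1 : ℝ) else 0) - q else 1) := by
    intro p
    simp only [Fintype.sum_bool, pEdge, if_true, Bool.false_eq_true, if_false]
    split_ifs <;> ring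
  rw [h2]
  simp_rw [h3, wt, h1, mul_assoc, ← Finset.prod_mul_distrib]
  rw [← Finset.mul_sum, Finset.prod_univ_sum, Fintype.piFinset_univ]

/-- Expectation of the monomial `P_{G,π}`. -/
theorem statement15 (n K : ℕ) (q lam : ℝ) (hn : 2 ≤ n) (hK : 2 ≤ K) (hKn : K ≤ n)
    (hq0 : 0 ≤ q) (hp1 : q + lam ≤ 1) (hlam : 0 < lam)
    (T : Template) (π : Fin T.v ↪ Fin n) (hπ : π ∈ PiV n hn T) :
    expec n K q lam (fun _ y => PG n q T π y) =
      lam ^ T.E.card *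
        ((K : ℝ)⁻¹) ^ (T.v - Nat.card T.graph.ConnectedComponent) := by
  have hK0 : (K : ℝ) ≠ 0 := by
    have : K ≠ 0 := by omega
    exact_mod_cast this
  have hvn : T.v ≤ n := by simpa using Fintype.card_le_of_embedding π
  have hcv : Nat.card T.graph.ConnectedComponent ≤ T.v := by
    simpa using Nat.card_le_card_of_surjective T.graph.connectedComponentMk Quot.mk_surjective
  have hprod : ∀ x : Fin T.v → Fin K,
      (∏ e ∈ T.E, if x e.1 = x e.2 then lam else 0) =
        if ∀ a b, T.graph.Adj a b → x a = x b then lam ^ T.E.card else 0 := by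
    intro x
    rw [Finset.prod_ite_zero, Finset.prod_const]
    simp only [graph_compat_iff]
    congr
  have hcount := card_compat (α := Fin K) T.graph
  rw [Fintype.card_subtype, Fintype.card_fin] at hcount
  unfold expec
  simp_rw [cond_expec]
  rw [← Finset.mul_sum,
    sum_comp_embedding π (fun x => ∏ e ∈ T.E, if x e.1 = x e.2 then lam else 0)]
  simp_rw [hprod]
  rw [← Finset.sum_filter, Finset.sum_const, nsmul_eq_mul, hcount]
  push_cast
  -- `K⁻ⁿ K^(n-v) K^c = K^(-(v-c))`, with `c ≤ v ≤ n`.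
  obtain ⟨m, hm⟩ := Nat.exists_eq_add_of_le hvn
  obtain ⟨d, hd⟩ := Nat.exists_eq_add_of_le hcv
  have e1 : n - T.v = m := by omega
  have e2 : T.v - Nat.card T.graph.ConnectedComponent = d := by omega
  have e3 : n = m + Nat.card T.graph.ConnectedComponent + d := by omega
  rw [e1, e2, e3, pow_add, pow_add, inv_pow, inv_pow]
  field_simp

end SBM
end
end

section
/- Let z_1,…,z_N be i.i.d. uniform on {1,…,K} and let H̄ be a finite simple graph on a subset of {1,…,N}. If H is obtained from H̄ by identifying (merging) some pairs of vertices (with H also a graph on a subset of {1,…,N}), then E[ ∏_{(i,j)∈E(H)} 1{z_i=z_j} ] ≥ E[ ∏_{(i,j)∈E(H̄)} 1{z_i=z_j} ]; equivalently, K^{−|V(H)|+#CC(H)} ≥ K^{−|V(H̄)|+#CC(H̄)}. -/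
open Classical

/-!
The number of labelings `z : Fin N → Fin K` that are monochromatic along all edges of a graph `G` on
`V` is `K ^ #CC(G) * K ^ (N - |V|)` (`sum_prod_eq`): one free label per component and one per index
outside `V`. Both claims therefore reduce to `#CC(H̄) + |V(H)| ≤ #CC(H) + |V(H̄)|` (`card_cc_le`).

This inequality is proved by rank-nullity. Consider the linear map that sends a rational function `c`
on the components of `H̄` to the differences `c[x] - c[f x]`, for `x` ranging over the `|V1| - |V2|`
vertices that disappear in the merging. A function in its kernel takes equal values on merged
vertices, so it is pulled back from a function on the components of `H`. The kernel thus has dimension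
at most `#CC(H)`, while the range has dimension at most `|V1| - |V2|`.
-/

lemma eq_of_reachable {V α : Type*} {G : SimpleGraph V} {z : V → α}
    (hz : ∀ i j, G.Adj i j → z i = z j) {v w : V} (h : G.Reachable v w) : z v = z w := by
  obtain ⟨p⟩ := h
  induction p with
  | nil => rfl
  | cons h _ ih => exact (hz _ _ h).trans ih

/-- The function on connected components induced by a function that is constant along edges. -/
def ccLift {V α : Type*} {G : SimpleGraph V} (z : V → α)
    (hz : ∀ i j, G.Adj i j → z i = z j) : G.ConnectedComponent → α :=
  SimpleGraph.ConnectedComponent.lift z fun _ _ p _ => eq_of_reachable hz ⟨p⟩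

lemma cc_eq_of_adj {V : Type*} {G : SimpleGraph V} {i j : V} (h : G.Adj i j) :
    G.connectedComponentMk i = G.connectedComponentMk j :=
  SimpleGraph.ConnectedComponent.eq.2 h.reachable

/-- A labeling of `Fin N` that is constant along the edges of a graph on `V` amounts to a labeling of
the connected components together with arbitrary labels outside `V`. -/
def goodEquiv {N K : ℕ} (V : Finset (Fin N)) (G : SimpleGraph ↥V) :
    {z : Fin N → Fin K // ∀ i j : ↥V, G.Adj i j → z i = z j} ≃
      (G.ConnectedComponent → Fin K) × ({i : Fin N // i ∉ V} → Fin K) where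
  toFun z := (ccLift (fun i : ↥V => z.1 i) z.2, fun i => z.1 i)
  invFun p := ⟨fun i => if h : i ∈ V then p.1 (G.connectedComponentMk ⟨i, h⟩) else p.2 ⟨i, h⟩, by
    intro i j h
    simp [cc_eq_of_adj h]⟩
  left_inv z := by
    ext i
    by_cases h : i ∈ V <;> simp [h, ccLift]
  right_inv p := by
    ext c
    · induction c using SimpleGraph.ConnectedComponent.ind
      simp [ccLift]
    · simp [c.2]

lemma sum_prod_eq {N K : ℕ} (V : Finset (Fin N)) (G : SimpleGraph ↥V) :
    (∑ z : Fin N → Fin K, ∏ e ∈ G.edgeFinset,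
          (if ∀ i ∈ e, ∀ j ∈ e, z i.1 = z j.1 then (1 : ℝ) else 0)) =
      (K : ℝ) ^ (Nat.card G.ConnectedComponent + (N - V.card)) := by
  have h1 : ∀ z : Fin N → Fin K, (∏ e ∈ G.edgeFinset,
      (if ∀ i ∈ e, ∀ j ∈ e, z i.1 = z j.1 then (1 : ℝ) else 0)) =
      if ∀ i j : ↥V, G.Adj i j → z i = z j then 1 else 0 := by
    intro z
    rw [Finset.prod_ite_zero]
    simp only [Finset.prod_const_one]
    refine if_congr ?_ rfl rfl
    constructor
    · intro h i j hij
      exact h s(i, j) (by simpa using hij) i (by simp) j (by simp)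
    · intro h e
      induction e using Sym2.ind with
      | _ a b =>
        intro hab i hi j hj
        have hab' := h a b (by simpa using hab)
        rcases Sym2.mem_iff.1 hi with rfl | rfl <;> rcases Sym2.mem_iff.1 hj with rfl | rfl <;>
          simp [hab']
  simp only [h1]
  rw [Finset.sum_boole, ← Fintype.card_subtype, Fintype.card_congr (goodEquiv V G)]
  simp [Fintype.card_subtype_compl, pow_add, Nat.card_eq_fintype_card]

/-- Merging loses at most as many connected components as vertices. -/
lemma card_cc_le {N : ℕ} (V1 V2 : Finset (Fin N)) (hsub : V2 ⊆ V1)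
    (Hbar : SimpleGraph ↥V1) (H : SimpleGraph ↥V2) (f : ↥V1 → ↥V2)
    (hret : ∀ v : ↥V2, f ⟨v.1, hsub v.2⟩ = v)
    (hadj : ∀ a b : ↥V2, H.Adj a b ↔ a ≠ b ∧ ∃ x y : ↥V1, f x = a ∧ f y = b ∧ Hbar.Adj x y) :
    Nat.card Hbar.ConnectedComponent + V2.card ≤ Nat.card H.ConnectedComponent + V1.card := by
  let ι : ↥V2 → ↥V1 := fun v => ⟨v.1, hsub v.2⟩
  let g : Hbar.ConnectedComponent → H.ConnectedComponent :=
    ccLift (fun x => H.connectedComponentMk (f x)) (by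
      intro x y h
      by_cases hxy : f x = f y
      · simp [hxy]
      · exact cc_eq_of_adj ((hadj _ _).2 ⟨hxy, x, y, rfl, rfl, h⟩))
  let S : (Hbar.ConnectedComponent → ℚ) →ₗ[ℚ] (↥(V1 \ V2) → ℚ) :=
    { toFun := fun c x =>
        c (Hbar.connectedComponentMk ⟨x.1, (Finset.mem_sdiff.1 x.2).1⟩) -
          c (Hbar.connectedComponentMk (ι (f ⟨x.1, (Finset.mem_sdiff.1 x.2).1⟩)))
      map_add' := by intro a b; ext x; simp; ring
      map_smul' := by intro a b; ext x; simp; ring }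
  have hker : LinearMap.ker S ≤ LinearMap.range (LinearMap.funLeft ℚ ℚ g) := by
    intro c hc
    -- Off `V2` this is membership in the kernel; on `V2` it holds because `f` is a retraction.
    have hf : ∀ x : ↥V1, c (Hbar.connectedComponentMk x) =
        c (Hbar.connectedComponentMk (ι (f x))) := by
      intro x
      by_cases hx : x.1 ∈ V2
      · have : ι (f x) = x := by
          have := hret ⟨x.1, hx⟩
          simp only [Subtype.coe_eta] at this
          rw [this]
        rw [this]
      · exact sub_eq_zero.1 (congrFun (LinearMap.mem_ker.1 hc)
          ⟨x.1, Finset.mem_sdiff.2 ⟨x.2, hx⟩⟩)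
    refine ⟨ccLift (fun v => c (Hbar.connectedComponentMk (ι v))) ?_, ?_⟩
    · intro a b hab
      obtain ⟨-, x, y, rfl, rfl, hxy⟩ := (hadj a b).1 hab
      simp only [← hf, cc_eq_of_adj hxy]
    · ext d
      induction d using SimpleGraph.ConnectedComponent.ind with
      | _ x => exact (hf x).symm
  have h1 := LinearMap.finrank_range_add_finrank_ker S
  have h2 := Submodule.finrank_mono hker
  have h3 := LinearMap.finrank_range_le (LinearMap.funLeft ℚ ℚ g)
  have h4 := Submodule.finrank_le (LinearMap.range S)
  rw [Module.finrank_fintype_fun_eq_card] at h1 h3 h4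
  rw [Fintype.card_coe, Finset.card_sdiff_of_subset hsub] at h4
  have h5 := Finset.card_le_card hsub
  rw [Nat.card_eq_fintype_card, Nat.card_eq_fintype_card]
  omega

/-- Merging vertices of a graph on (a subset of) `{1,…,N}` can only increase the probability,
under i.i.d. uniform labels `z : Fin N → Fin K`, that the labels are monochromatic along all
edges; equivalently `K^{-|V(H)|+#CC(H)} ≥ K^{-|V(H̄)|+#CC(H̄)}`. -/
theorem statement17 (N K : ℕ) (hK : 1 ≤ K)
    (V1 V2 : Finset (Fin N)) (hsub : V2 ⊆ V1)
    (Hbar : SimpleGraph ↥V1) (H : SimpleGraph ↥V2)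
    (f : ↥V1 → ↥V2) (hsurj : Function.Surjective f)
    (hret : ∀ v : ↥V2, f ⟨v.1, hsub v.2⟩ = v)
    (hadj : ∀ a b : ↥V2, H.Adj a b ↔ a ≠ b ∧ ∃ x y : ↥V1, f x = a ∧ f y = b ∧ Hbar.Adj x y) :
    ((∑ z : Fin N → Fin K, ∏ e ∈ H.edgeFinset,
          (if ∀ i ∈ e, ∀ j ∈ e, z i.1 = z j.1 then (1 : ℝ) else 0)) / (K : ℝ) ^ N ≥
      (∑ z : Fin N → Fin K, ∏ e ∈ Hbar.edgeFinset,
          (if ∀ i ∈ e, ∀ j ∈ e, z i.1 = z j.1 then (1 : ℝ) else 0)) / (K : ℝ) ^ N) ∧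
    (K : ℝ) ^ (-(V2.card : ℤ) + Nat.card H.ConnectedComponent) ≥
      (K : ℝ) ^ (-(V1.card : ℤ) + Nat.card Hbar.ConnectedComponent) := by
  have hcc := card_cc_le V1 V2 hsub Hbar H f hret hadj
  have hK' : (1 : ℝ) ≤ K := by exact_mod_cast hK
  have hV1 : V1.card ≤ N := by simpa using V1.card_le_univ
  constructor
  · rw [sum_prod_eq, sum_prod_eq]
    refine div_le_div_of_nonneg_right (pow_le_pow_right₀ hK' ?_) (by positivity)
    omega
  · exact zpow_le_zpow_right₀ hK' (by omega)
end

section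
/- Assume q ≤ 1/2, q + 2λ ≤ 1, λ > 0, 0 < q, and D ≥ 2. Let G = (V,E) ∈ G_{≤D}. If G is connected (with v_1 and v_2 in the same connected component), then |E[x·Ψ_G]| ≤ n^{−1/2} · [ min( (√n/K)·(λ/√q̄)^r , √(n/K)·λ^{r/2} ) ]^{|V|−1}, where r := |E|/(|V|−1). Moreover, if G has a connected component containing neither v_1 nor v_2, or if v_1 and v_2 lie in different connected components of G, then E[x·Ψ_G] = 0. -/
/-!
Given the labels `z`, the edges are independent and `E[Y_{ij} | z] = λ 1{z_i = z_j}`. Hence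
`E[∏_{e ∈ S} Y_{π(e)} | z]` equals `λ^{|S|}` when `z` agrees along every edge of `S` and `0`
otherwise (`condE_monomial`), and `E[P̄_{G,π} | z]` factorizes over the components of `G`
(`condE_Pbar`). Everything then reduces to i.i.d. uniform labels.

*Vanishing.* Take a component `C` with an edge that does not contain both distinguished nodes. If it
contains exactly one of them, cyclically shifting the labels on `C` leaves `E[P̄_{G,π} | z]` unchanged
while `x` averages to `0` over the shifts (`sum_xind_mul_eq_zero`). If it contains neither, its factor
is centered and independent of `x` and of the other factors (`sum_mul_sum_of_indep`). In both
situations of the theorem such a component exists.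

*Connected templates.* Since `E[x] = 0`, only labelings constant on `π(V)` contribute to
`E[x P̄_{G,π}]`, so with `A = λ^{|E|} ∑_π P(z constant on π(V))` the numerator of `E[x Ψ_G]` is at
most `A ≤ |Π_V| λ^{|E|} K^{-(|V|-1)}`. The second moment `E[P_{G,π}²]` is at least `q̄^{|E|}`, and at
least `λ^{|E|} P(z constant on π(V))` because `q̄ + λ(1-2q) ≥ λ`; thus
`𝕍(G) ≥ max(A, |Π_V| q̄^{|E|})`. With `|Π_V| ≤ n^{|V|-2}`, the two lower bounds on `𝕍(G)` give the two
terms of the minimum (`connected_bound`).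
-/

open Classical Finset

noncomputable section

namespace SBM

/-! ### Integrating out the edges -/

/-- Conditional expectation given the labels `z` of a function of the edges. -/
def condE (n K : ℕ) (q lam : ℝ) (z : Lab n K) (H : EdgeConf n → ℝ) : ℝ :=
  ∑ y : EdgeConf n,
    (∏ p : Pairs n, (if y p then pEdge n K q lam z p else 1 - pEdge n K q lam z p)) * H y

lemma expec_eq_sum_condE (n K : ℕ) (q lam : ℝ) (g : Lab n K → ℝ) (H : EdgeConf n → ℝ) :
    expec n K q lam (fun z y => g z * H y)
      = ((K : ℝ)⁻¹) ^ n * ∑ z : Lab n K, g z * condE n K q lam z H := by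
  simp only [expec, condE, wt, Finset.mul_sum]
  refine Finset.sum_congr rfl fun z _ => Finset.sum_congr rfl fun y _ => ?_
  ring

lemma expec_eq_sum_condE' (n K : ℕ) (q lam : ℝ) (H : EdgeConf n → ℝ) :
    expec n K q lam (fun _ y => H y)
      = ((K : ℝ)⁻¹) ^ n * ∑ z : Lab n K, condE n K q lam z H := by
  simpa using expec_eq_sum_condE n K q lam (fun _ => 1) H

/-- Given the labels the edges are independent, so the conditional expectation of a product over
distinct pairs is the product of the one-edge expectations. -/
lemma condE_prod {n K : ℕ} (q lam : ℝ) (z : Lab n K) {ι : Type*} [Fintype ι]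
    (p : ι → Pairs n) (hp : Function.Injective p) (φ : Bool → ℝ) :
    condE n K q lam z (fun y => ∏ i, φ (y (p i)))
      = ∏ i, (pEdge n K q lam z (p i) * φ true + (1 - pEdge n K q lam z (p i)) * φ false) := by
  have key : ∀ ψ : Pairs n → ℝ, ∏ i, ψ (p i)
      = ∏ r : Pairs n, if r ∈ Finset.univ.image p then ψ r else 1 := by
    intro ψ
    rw [Finset.prod_ite_mem, Finset.univ_inter, Finset.prod_image (fun a _ b _ h => hp h)]
  have h1 : ∀ y : EdgeConf n, ∏ i, φ (y (p i))
      = ∏ r : Pairs n, if r ∈ Finset.univ.image p then φ (y r) else 1 :=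
    fun y => key fun r => φ (y r)
  simp only [condE, h1, ← Finset.prod_mul_distrib]
  rw [key fun r => pEdge n K q lam z r * φ true + (1 - pEdge n K q lam z r) * φ false]
  have := Finset.prod_univ_sum (fun _ : Pairs n => (Finset.univ : Finset Bool))
    (fun r b => (if b then pEdge n K q lam z r else 1 - pEdge n K q lam z r) *
      if r ∈ Finset.univ.image p then φ b else 1)
  rw [Fintype.piFinset_univ] at this
  rw [← this]
  refine Finset.prod_congr rfl fun r _ => ?_
  rw [Fintype.sum_bool]
  simp only [if_true, Bool.false_eq_true, if_false]
  split_ifs <;> ring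

/-- The unordered pair of nodes onto which an embedding maps an edge of `T`. -/
def edgePair {n : ℕ} (T : Template) (π : Fin T.v ↪ Fin n) (e : {e // e ∈ T.E}) : Pairs n :=
  ⟨(min (π e.1.1) (π e.1.2), max (π e.1.1) (π e.1.2)),
    min_lt_max.mpr fun h => (T.hE e.1 e.2).ne (π.injective h)⟩

lemma edgePair_injective {n : ℕ} (T : Template) (π : Fin T.v ↪ Fin n) :
    Function.Injective (edgePair T π) := by
  rintro ⟨⟨a, b⟩, h⟩ ⟨⟨c, d⟩, h'⟩ heq
  have hab : a < b := T.hE _ h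
  have hcd : c < d := T.hE _ h'
  simp only [edgePair, Subtype.mk.injEq, Prod.mk.injEq] at heq
  obtain ⟨h1, h2⟩ := heq
  have key : (a = c ∧ b = d) ∨ (a = d ∧ b = c) := by
    rcases le_total (π a) (π b) with hx | hx <;> rcases le_total (π c) (π d) with hy | hy <;>
      simp only [min_eq_left, max_eq_right, min_eq_right, max_eq_left, hx, hy] at h1 h2 <;>
      have h1 := π.injective h1 <;> have h2 := π.injective h2 <;> simp [h1, h2]
  rcases key with ⟨rfl, rfl⟩ | ⟨rfl, rfl⟩
  · rfl
  · exact absurd hab hcd.asymm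

lemma pEdge_edgePair {n K : ℕ} (q lam : ℝ) (z : Lab n K) (T : Template) (π : Fin T.v ↪ Fin n)
    (e : {e // e ∈ T.E}) : pEdge n K q lam z (edgePair T π e)
      = if z (π e.1.1) = z (π e.1.2) then q + lam else q := by
  rcases le_total (π e.1.1) (π e.1.2) with hx | hx <;>
    simp [pEdge, edgePair, hx, eq_comm]

lemma Ymat_edge {n : ℕ} (q : ℝ) (T : Template) (π : Fin T.v ↪ Fin n) (y : EdgeConf n)
    (e : {e // e ∈ T.E}) :
    Ymat n q y (π e.1.1) (π e.1.2) = (if y (edgePair T π e) then 1 else 0) - q := by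
  have h : π e.1.1 ≠ π e.1.2 := fun h => (T.hE e.1 e.2).ne (π.injective h)
  rw [Ymat, dif_neg h]
  rfl

/-- Factorization over an arbitrary subset of the edges of the template. -/
lemma condE_prod_edges {n K : ℕ} (q lam : ℝ) (z : Lab n K) (T : Template) (π : Fin T.v ↪ Fin n)
    (S : Finset (Fin T.v × Fin T.v)) (hS : S ⊆ T.E) (φ : ℝ → ℝ) :
    condE n K q lam z (fun y => ∏ e ∈ S, φ (Ymat n q y (π e.1) (π e.2)))
      = ∏ e ∈ S, if z (π e.1) = z (π e.2) then (q + lam) * φ (1 - q) + (1 - q - lam) * φ (-q)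
          else q * φ (1 - q) + (1 - q) * φ (-q) := by
  have hinj : Function.Injective
      (fun e : {e // e ∈ S} => edgePair T π ⟨e.1, hS e.2⟩) := by
    intro a b h
    have := edgePair_injective T π h
    exact Subtype.ext (by simpa using this)
  have h := condE_prod q lam z _ hinj (fun b => φ ((if b then 1 else 0) - q))
  have h1 : ∀ y : EdgeConf n, ∏ e ∈ S, φ (Ymat n q y (π e.1) (π e.2))
      = ∏ e : {e // e ∈ S}, φ ((if y (edgePair T π ⟨e.1, hS e.2⟩) then 1 else 0) - q) := by
    intro y
    rw [← Finset.prod_coe_sort]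
    exact Finset.prod_congr rfl fun e _ => by rw [← Ymat_edge q T π y ⟨e.1, hS e.2⟩]
  simp only [h1]
  rw [h, ← Finset.prod_coe_sort S]
  refine Finset.prod_congr rfl fun e _ => ?_
  rw [pEdge_edgePair]
  simp only [if_true, Bool.false_eq_true, if_false, zero_sub]
  split_ifs <;> ring

/-- `E[∏_{e ∈ S} Y_{π(e)} | z]`. -/
def edgeProd {n K : ℕ} (lam : ℝ) (T : Template) (π : Fin T.v ↪ Fin n)
    (S : Finset (Fin T.v × Fin T.v)) (z : Lab n K) : ℝ :=
  ∏ e ∈ S, if z (π e.1) = z (π e.2) then lam else 0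

lemma condE_monomial {n K : ℕ} (q lam : ℝ) (z : Lab n K) (T : Template) (π : Fin T.v ↪ Fin n)
    (S : Finset (Fin T.v × Fin T.v)) (hS : S ⊆ T.E) :
    condE n K q lam z (fun y => ∏ e ∈ S, Ymat n q y (π e.1) (π e.2))
      = edgeProd lam T π S z := by
  rw [condE_prod_edges q lam z T π S hS (fun t => t)]
  refine Finset.prod_congr rfl fun e _ => ?_
  split_ifs <;> ring

lemma condE_PG_sq {n K : ℕ} (q lam : ℝ) (z : Lab n K) (T : Template) (π : Fin T.v ↪ Fin n) :
    condE n K q lam z (fun y => PG n q T π y ^ 2)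
      = ∏ e ∈ T.E, if z (π e.1) = z (π e.2) then q * (1 - q) + lam * (1 - 2 * q)
          else q * (1 - q) := by
  simp only [PG, ← Finset.prod_pow]
  rw [condE_prod_edges q lam z T π T.E subset_rfl (fun t => t ^ 2)]
  refine Finset.prod_congr rfl fun e _ => ?_
  split_ifs <;> ring

/-! ### Connected components of a template -/

lemma reachable_of_mem {T : Template} {e : Fin T.v × Fin T.v} (he : e ∈ T.E) :
    T.graph.Reachable e.1 e.2 := by
  apply SimpleGraph.Adj.reachable
  rw [Template.graph, SimpleGraph.fromRel_adj]
  exact ⟨(T.hE e he).ne, Or.inl he⟩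

lemma compRep_eq_of_reachable {T : Template} {u w : Fin T.v} (h : T.graph.Reachable u w) :
    compRep T u = compRep T w := by
  have : (Finset.univ.filter fun a => T.graph.Reachable u a)
      = Finset.univ.filter fun a => T.graph.Reachable w a := by
    ext a
    simp only [Finset.mem_filter, Finset.mem_univ, true_and]
    exact ⟨fun h' => h.symm.trans h', fun h' => h.trans h'⟩
  simp only [compRep, this]

/-- The component of any edge has its representative in `edgeCompReps`. -/
lemma compRep_mem_edgeCompReps {T : Template} {e : Fin T.v × Fin T.v} (he : e ∈ T.E) :
    compRep T e.1 ∈ edgeCompReps T := by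
  simp only [edgeCompReps, Finset.mem_filter, Finset.mem_univ, true_and]
  exact ⟨(compRep_eq_of_reachable (compRep_reachable T e.1)).symm, e, he, compRep_reachable T e.1⟩

lemma reps_eq_of_reachable {T : Template} {u w : Fin T.v} (hu : u ∈ edgeCompReps T)
    (hw : w ∈ edgeCompReps T) (h : T.graph.Reachable u w) : u = w := by
  simp only [edgeCompReps, Finset.mem_filter] at hu hw
  rw [← hu.2.1, ← hw.2.1, compRep_eq_of_reachable h]

/-- Conditionally on the labels the components are independent, hence
`E[P̄_{G,π} | z] = ∏_l (E[P_{G_l,π} | z] - E[P_{G_l,π}])`. -/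
lemma condE_Pbar {n K : ℕ} (q lam : ℝ) (z : Lab n K) (T : Template) (π : Fin T.v ↪ Fin n) :
    condE n K q lam z (Pbar n K q lam T π)
      = ∏ w ∈ edgeCompReps T, (edgeProd lam T π (compEdges T w) z
          - expec n K q lam fun _ y' => Pcomp n q T π w y') := by
  set c : Fin T.v → ℝ := fun w => expec n K q lam fun _ y' => Pcomp n q T π w y'
  have hP : ∀ y, Pbar n K q lam T π y = ∑ t ∈ (edgeCompReps T).powerset,
      (∏ w ∈ t, Pcomp n q T π w y) * ∏ w ∈ edgeCompReps T \ t, -c w := by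
    intro y
    rw [← Finset.prod_add]
    exact Finset.prod_congr rfl fun w _ => sub_eq_add_neg _ _
  simp only [sub_eq_add_neg]
  rw [Finset.prod_add]
  simp only [condE, hP, Finset.mul_sum]
  rw [Finset.sum_comm]
  refine Finset.sum_congr rfl fun t ht => ?_
  rw [Finset.mem_powerset] at ht
  simp only [← mul_assoc]
  rw [← Finset.sum_mul]
  congr 1
  have hdisj : Set.PairwiseDisjoint (t : Set (Fin T.v)) (compEdges T) := by
    intro u hu w hw huw
    rw [Function.onFun, Finset.disjoint_left]
    intro e he he'
    simp only [compEdges, Finset.mem_filter] at he he'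
    exact huw (reps_eq_of_reachable (ht hu) (ht hw) (he.2.symm.trans he'.2))
  have hsub : t.biUnion (compEdges T) ⊆ T.E :=
    Finset.biUnion_subset.mpr fun w _ => Finset.filter_subset _ _
  have := condE_monomial q lam z T π _ hsub
  simp only [edgeProd, Finset.prod_biUnion hdisj, condE] at this
  simpa only [Pcomp, edgeProd] using this

lemma expec_Pcomp {n K : ℕ} (q lam : ℝ) (T : Template) (π : Fin T.v ↪ Fin n) (w : Fin T.v) :
    expec n K q lam (fun _ y => Pcomp n q T π w y)
      = ((K : ℝ)⁻¹) ^ n * ∑ z : Lab n K, edgeProd lam T π (compEdges T w) z := by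
  rw [expec_eq_sum_condE']
  congr 1
  exact Finset.sum_congr rfl fun z _ =>
    condE_monomial q lam z T π _ (Finset.filter_subset _ _)

/-- Linearity: `E[x Ψ_G]` as a sum over embeddings. -/
lemma expec_x_Psi {n K : ℕ} (hn : 2 ≤ n) (q lam : ℝ) (T : Template) (x : Lab n K → ℝ) :
    expec n K q lam (fun z y => x z * Psi n K hn q lam T y)
      = (∑ π ∈ PiV n hn T, ((K : ℝ)⁻¹) ^ n *
          ∑ z : Lab n K, x z * condE n K q lam z (Pbar n K q lam T π))
        / Real.sqrt (VG n K hn q lam T) := by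
  simp only [← expec_eq_sum_condE]
  simp only [expec, Psi, div_eq_mul_inv, Finset.mul_sum, Finset.sum_mul]
  rw [Finset.sum_comm' (t' := Finset.univ) (s' := fun _ => PiV n hn T) (by simp)]
  refine Finset.sum_congr rfl fun z _ => ?_
  rw [Finset.sum_comm]
  refine Finset.sum_congr rfl fun y _ => Finset.sum_congr rfl fun π _ => ?_
  ring

/-! ### Vanishing -/

/-- Independence of the labels on `A` and off `A`, for i.i.d. uniform labels. It is obtained by
exchanging two independent copies of the labels off `A`. -/
lemma sum_mul_sum_of_indep {n K : ℕ} (A : Fin n → Prop) (F H : Lab n K → ℝ)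
    (hF : ∀ z z', (∀ i, A i → z i = z' i) → F z = F z')
    (hH : ∀ z z', (∀ i, ¬ A i → z i = z' i) → H z = H z') :
    (Fintype.card (Lab n K) : ℝ) * ∑ z, F z * H z = (∑ z, F z) * ∑ z, H z := by
  let mix : Lab n K → Lab n K → Lab n K := fun z z' i => if A i then z i else z' i
  let σ : Lab n K × Lab n K ≃ Lab n K × Lab n K :=
    { toFun := fun p => (mix p.1 p.2, mix p.2 p.1)
      invFun := fun p => (mix p.1 p.2, mix p.2 p.1)
      left_inv := by
        rintro ⟨a, b⟩
        ext i <;> simp only [mix] <;> split_ifs <;> rfl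
      right_inv := by
        rintro ⟨a, b⟩
        ext i <;> simp only [mix] <;> split_ifs <;> rfl }
  have h1 : (∑ z, F z) * ∑ z, H z = ∑ p : Lab n K × Lab n K, F p.1 * H p.2 := by
    rw [Fintype.sum_prod_type, Finset.sum_mul_sum]
  have h2 : ∑ p : Lab n K × Lab n K, F p.1 * H p.1
      = (Fintype.card (Lab n K) : ℝ) * ∑ z, F z * H z := by
    rw [Fintype.sum_prod_type_right]
    simp
  rw [h1, ← h2, ← Equiv.sum_comp σ]
  refine Finset.sum_congr rfl fun p _ => ?_
  congr 1
  · exact hF _ _ fun i hi => by simp [σ, mix, hi]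
  · exact hH _ _ fun i hi => by simp [σ, mix, hi]

/-- If `g` is unchanged by cyclically shifting the labels of the nodes of `A`, and exactly one of
the nodes `i, j` lies in `A`, then `g` is uncorrelated with `1{z i = z j} - 1/K`: averaging this
variable over the shifts gives `0`. -/
lemma sum_xind_mul_eq_zero {n K : ℕ} [NeZero K] (A : Fin n → Prop) (i j : Fin n)
    (hij : ¬ (A i ↔ A j)) (g : Lab n K → ℝ)
    (hg : ∀ (s : Fin K) z, g (fun k => if A k then z k + s else z k) = g z) :
    ∑ z, xind n K i j z * g z = 0 := by
  let σ : Fin K → (Lab n K ≃ Lab n K) := fun s =>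
    { toFun := fun z k => if A k then z k + s else z k
      invFun := fun z k => if A k then z k - s else z k
      left_inv := by
        intro z
        ext k
        simp only
        split_ifs <;> simp
      right_inv := by
        intro z
        ext k
        simp only
        split_ifs <;> simp }
  have h1 : ∀ s : Fin K, ∑ z, xind n K i j z * g z = ∑ z, xind n K i j (σ s z) * g z := by
    intro s
    rw [← Equiv.sum_comp (σ s)]
    exact Finset.sum_congr rfl fun z _ => congrArg _ (hg s z)
  have h2 : ∀ z, ∑ s : Fin K, xind n K i j (σ s z) = 0 := by
    intro z
    have hK : (K : ℝ) ≠ 0 := Nat.cast_ne_zero.mpr (NeZero.ne K)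
    have : ∑ s : Fin K, (if (σ s z) i = (σ s z) j then (1 : ℝ) else 0) = 1 := by
      by_cases hi : A i
      · have hj : ¬ A j := fun hj => hij ⟨fun _ => hj, fun _ => hi⟩
        have : ∀ s : Fin K, (σ s z) i = (σ s z) j ↔ s = z j - z i := by
          intro s
          simp only [σ, Equiv.coe_fn_mk, hi, hj, if_true, if_false]
          rw [eq_sub_iff_add_eq, add_comm]
        simp [this]
      · have hj : A j := by
          by_contra hj
          exact hij ⟨fun h => absurd h hi, fun h => absurd h hj⟩
        have : ∀ s : Fin K, (σ s z) i = (σ s z) j ↔ s = z i - z j := by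
          intro s
          simp only [σ, Equiv.coe_fn_mk, hi, hj, if_true, if_false]
          rw [eq_sub_iff_add_eq, add_comm, eq_comm]
        simp [this]
    simp only [xind, Finset.sum_sub_distrib, this]
    simp [hK]
  have h3 : (K : ℝ) * ∑ z, xind n K i j z * g z = 0 := by
    calc (K : ℝ) * ∑ z, xind n K i j z * g z
        = ∑ s : Fin K, ∑ z, xind n K i j (σ s z) * g z := by
          rw [← Finset.sum_congr rfl fun s _ => h1 s]
          simp
      _ = ∑ z, (∑ s : Fin K, xind n K i j (σ s z)) * g z := by
          rw [Finset.sum_comm]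
          simp only [Finset.sum_mul]
      _ = 0 := by simp [h2]
  exact (mul_eq_zero.mp h3).resolve_left (Nat.cast_ne_zero.mpr (NeZero.ne K))

/-- If some edge of `T` lies in a component that does not contain both distinguished nodes, then
`x` is uncorrelated with `P̄_{G,π}`. -/
lemma sum_x_condE_Pbar_eq_zero {n K : ℕ} (hK : 2 ≤ K) (q lam : ℝ) (T : Template)
    (π : Fin T.v ↪ Fin n) {e : Fin T.v × Fin T.v} (he : e ∈ T.E)
    (hsep : ¬ (T.graph.Reachable e.1 T.v1 ∧ T.graph.Reachable e.1 T.v2)) :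
    ∑ z : Lab n K, xind n K (π T.v1) (π T.v2) z * condE n K q lam z (Pbar n K q lam T π) = 0 := by
  have : NeZero K := ⟨by omega⟩
  let A : Fin n → Prop := fun i => ∃ a, π a = i ∧ T.graph.Reachable e.1 a
  have hA : ∀ a, A (π a) ↔ T.graph.Reachable e.1 a := by
    intro a
    constructor
    · rintro ⟨b, hb, h⟩
      rwa [← π.injective hb]
    · exact fun h => ⟨a, rfl, h⟩
  have hedge : ∀ e' ∈ T.E, (A (π e'.1) ↔ A (π e'.2)) := by
    intro e' he'
    rw [hA, hA]
    exact ⟨fun h => h.trans (reachable_of_mem he'), fun h => h.trans (reachable_of_mem he').symm⟩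
  by_cases hone : A (π T.v1) ↔ A (π T.v2)
  -- The component contains neither distinguished node: its factor is centered and independent of
  -- all the others.
  · have hn1 : ¬ A (π T.v1) := fun h => hsep ⟨(hA _).1 h, (hA _).1 (hone.1 h)⟩
    have hn2 : ¬ A (π T.v2) := fun h => hn1 (hone.2 h)
    set r := compRep T e.1 with hr
    have hrm : r ∈ edgeCompReps T := compRep_mem_edgeCompReps he
    have her : T.graph.Reachable e.1 r := compRep_reachable T e.1
    set c : Fin T.v → ℝ := fun w => expec n K q lam fun _ y' => Pcomp n q T π w y' with hc
    let F : Lab n K → ℝ := fun z => edgeProd lam T π (compEdges T r) z - c r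
    let H : Lab n K → ℝ := fun z => xind n K (π T.v1) (π T.v2) z *
      ∏ w ∈ (edgeCompReps T).erase r, (edgeProd lam T π (compEdges T w) z - c w)
    have hF : ∀ z z', (∀ i, A i → z i = z' i) → F z = F z' := by
      intro z z' h
      simp only [F, edgeProd]
      congr 1
      refine Finset.prod_congr rfl fun e' he' => ?_
      simp only [compEdges, Finset.mem_filter] at he'
      have h1 : A (π e'.1) := (hA _).2 (her.trans he'.2.symm)
      rw [h _ h1, h _ ((hedge _ he'.1).1 h1)]
    have hH : ∀ z z', (∀ i, ¬ A i → z i = z' i) → H z = H z' := by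
      intro z z' h
      simp only [H, edgeProd, xind, h _ hn1, h _ hn2]
      congr 1
      refine Finset.prod_congr rfl fun w hw => ?_
      congr 1
      refine Finset.prod_congr rfl fun e' he' => ?_
      simp only [compEdges, Finset.mem_filter] at he'
      have h1 : ¬ A (π e'.1) := by
        intro h1
        refine (Finset.mem_erase.mp hw).1 (reps_eq_of_reachable (Finset.mem_erase.mp hw).2 hrm ?_)
        exact he'.2.symm.trans (((hA _).1 h1).symm.trans her)
      rw [h _ h1, h _ (fun h2 => h1 ((hedge _ he'.1).2 h2))]
    have hind := sum_mul_sum_of_indep A F H hF hH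
    have hF0 : ∑ z, F z = 0 := by
      have hK0 : (K : ℝ) ≠ 0 := by positivity
      simp only [F, Finset.sum_sub_distrib, hc, expec_Pcomp]
      simp [hK0]
    rw [hF0, zero_mul] at hind
    have hcard : (Fintype.card (Lab n K) : ℝ) ≠ 0 := by
      simp [NeZero.ne K]
    rw [← (mul_eq_zero.mp hind).resolve_left hcard]
    refine Finset.sum_congr rfl fun z _ => ?_
    rw [condE_Pbar, ← Finset.mul_prod_erase _ _ hrm]
    simp only [F, H]
    ring
  · refine sum_xind_mul_eq_zero A _ _ hone _ fun s z => ?_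
    rw [condE_Pbar, condE_Pbar]
    refine Finset.prod_congr rfl fun w _ => ?_
    congr 1
    refine Finset.prod_congr rfl fun e' he' => ?_
    simp only [compEdges, Finset.mem_filter] at he'
    have h1 := hedge _ he'.1
    by_cases h : A (π e'.1)
    · simp [h, h1.1 h]
    · simp [h, mt h1.2 h]

lemma expec_x_Psi_eq_zero {n K : ℕ} (hn : 2 ≤ n) (hK : 2 ≤ K) (q lam : ℝ) (T : Template)
    {e : Fin T.v × Fin T.v} (he : e ∈ T.E)
    (hsep : ¬ (T.graph.Reachable e.1 T.v1 ∧ T.graph.Reachable e.1 T.v2)) :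
    expec n K q lam (fun z y =>
      xind n K ⟨0, by omega⟩ ⟨1, by omega⟩ z * Psi n K hn q lam T y) = 0 := by
  rw [expec_x_Psi, Finset.sum_eq_zero, zero_div]
  intro π hπ
  simp only [PiV, Finset.mem_filter, Finset.mem_univ, true_and] at hπ
  have := sum_x_condE_Pbar_eq_zero hK q lam T π he hsep
  rw [hπ.1, hπ.2] at this
  rw [this, mul_zero]

/-! ### Size of the correlation for connected templates -/

/-- Probability that the two endpoints of every edge of the embedded template share a label. -/
def monoProb (n K : ℕ) (T : Template) (π : Fin T.v ↪ Fin n) : ℝ :=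
  ((K : ℝ)⁻¹) ^ n *
    ((Finset.univ.filter fun z : Lab n K => ∀ e ∈ T.E, z (π e.1) = z (π e.2)).card : ℝ)

lemma edgeProd_eq_ite {n K : ℕ} (lam : ℝ) (T : Template) (π : Fin T.v ↪ Fin n) (z : Lab n K) :
    edgeProd lam T π T.E z
      = if ∀ e ∈ T.E, z (π e.1) = z (π e.2) then lam ^ T.E.card else 0 := by
  split_ifs with h
  · rw [edgeProd, Finset.prod_congr rfl fun e he => if_pos (h e he), Finset.prod_const]
  · push Not at h
    obtain ⟨e, he, hne⟩ := h
    exact Finset.prod_eq_zero he (if_neg hne)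

lemma eq_of_reachable {n K : ℕ} {T : Template} (π : Fin T.v ↪ Fin n) (z : Lab n K)
    (hz : ∀ e ∈ T.E, z (π e.1) = z (π e.2)) {a b : Fin T.v} (h : T.graph.Reachable a b) :
    z (π a) = z (π b) := by
  obtain ⟨w⟩ := h
  induction w with
  | nil => rfl
  | cons hadj _ ih =>
    rw [← ih]
    rw [Template.graph, SimpleGraph.fromRel_adj] at hadj
    rcases hadj.2 with h | h
    · exact hz _ h
    · exact (hz _ h).symm

lemma card_le_of_embedding {n : ℕ} {T : Template} (π : Fin T.v ↪ Fin n) : T.v ≤ n := by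
  simpa using Fintype.card_le_of_embedding π

/-- A labeling that is constant on the embedded template is determined by its values off the image
of `V \ {v₁}`. -/
lemma monoProb_le {n K : ℕ} (hK : 2 ≤ K) {T : Template} (hc : T.graph.Connected)
    (π : Fin T.v ↪ Fin n) : monoProb n K T π ≤ ((K : ℝ)⁻¹) ^ (T.v - 1) := by
  set B : Finset (Fin n) := ((Finset.univ.erase T.v1).map π)ᶜ with hB
  have hvn := card_le_of_embedding π
  have hBc : B.card = n - (T.v - 1) := by
    rw [hB, Finset.card_compl, Finset.card_map, Finset.card_erase_of_mem (Finset.mem_univ _)]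
    simp
  have hcard : (Finset.univ.filter fun z : Lab n K => ∀ e ∈ T.E, z (π e.1) = z (π e.2)).card
      ≤ K ^ (n - (T.v - 1)) := by
    have : Fintype.card ({i // i ∈ B} → Fin K) = K ^ (n - (T.v - 1)) := by
      simp [hBc]
    rw [← this, ← Finset.card_univ]
    refine Finset.card_le_card_of_injOn (fun z i => z i.1) (fun _ _ => Finset.mem_univ _) ?_
    intro z hz z' hz' h
    simp only [Finset.coe_filter, Finset.mem_univ, true_and, Set.mem_ofPred_eq] at hz hz'
    have hmem : ∀ i, i ∈ B → z i = z' i := fun i hi => congrFun h ⟨i, hi⟩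
    funext i
    by_cases hi : i ∈ B
    · exact hmem i hi
    · simp only [hB, Finset.mem_compl, not_not, Finset.mem_map] at hi
      obtain ⟨a, _, rfl⟩ := hi
      rw [eq_of_reachable π z hz (hc.preconnected a T.v1),
        eq_of_reachable π z' hz' (hc.preconnected a T.v1)]
      exact hmem _ (by simp [hB])
  have hK0 : (K : ℝ) ≠ 0 := by positivity
  calc monoProb n K T π ≤ ((K : ℝ)⁻¹) ^ n * (K : ℝ) ^ (n - (T.v - 1)) := by
        unfold monoProb
        gcongr
        exact_mod_cast hcard
    _ = ((K : ℝ)⁻¹) ^ (T.v - 1) := by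
        have : n = (T.v - 1) + (n - (T.v - 1)) := by omega
        conv_lhs => rw [this]
        rw [Nat.add_sub_cancel_left, pow_add, mul_assoc, ← mul_pow, inv_mul_cancel₀ hK0, one_pow,
          mul_one]

/-- For a connected template only the constant labelings contribute to `E[x P̄_{G,π}]`, and on those
`0 ≤ x ≤ 1`. -/
lemma abs_x_condE_le {n K : ℕ} (hK : 2 ≤ K) (q : ℝ) {lam : ℝ} (hlam : 0 < lam) {T : Template}
    (hc : T.graph.Connected) (hE : T.E.Nonempty) (π : Fin T.v ↪ Fin n) :
    |((K : ℝ)⁻¹) ^ n * ∑ z : Lab n K,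
        xind n K (π T.v1) (π T.v2) z * condE n K q lam z (Pbar n K q lam T π)|
      ≤ lam ^ T.E.card * monoProb n K T π := by
  have : NeZero K := ⟨by omega⟩
  obtain ⟨e, he⟩ := hE
  have hreps : edgeCompReps T = {compRep T e.1} := by
    refine Finset.eq_singleton_iff_unique_mem.mpr ⟨compRep_mem_edgeCompReps he, fun w hw => ?_⟩
    exact reps_eq_of_reachable hw (compRep_mem_edgeCompReps he) (hc.preconnected _ _)
  have hcomp : compEdges T (compRep T e.1) = T.E :=
    Finset.filter_true_of_mem fun _ _ => hc.preconnected _ _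
  have hv : π T.v2 ≠ π T.v1 := by
    intro h
    simpa [Template.v1, Template.v2] using π.injective h
  have hx : ∑ z : Lab n K, xind n K (π T.v1) (π T.v2) z = 0 := by
    simpa using sum_xind_mul_eq_zero (K := K) (fun i => i = π T.v1) (π T.v1) (π T.v2)
      (by simpa using hv) (fun _ => 1) (fun _ _ => rfl)
  have h1 : ∑ z : Lab n K,
        xind n K (π T.v1) (π T.v2) z * condE n K q lam z (Pbar n K q lam T π)
      = ∑ z : Lab n K, xind n K (π T.v1) (π T.v2) z * edgeProd lam T π T.E z := by
    simp only [condE_Pbar, hreps, Finset.prod_singleton, hcomp, mul_sub, Finset.sum_sub_distrib]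
    rw [← Finset.sum_mul, hx, zero_mul, sub_zero]
  have hKi : (0 : ℝ) ≤ 1 / K ∧ (1 : ℝ) / K ≤ 1 := by
    have : (1 : ℝ) ≤ K := by exact_mod_cast (by omega : 1 ≤ K)
    exact ⟨by positivity, by rw [div_le_one (by positivity)]; exact this⟩
  rw [h1, abs_mul, abs_of_nonneg (by positivity : (0 : ℝ) ≤ ((K : ℝ)⁻¹) ^ n), monoProb,
    mul_left_comm]
  gcongr
  refine (Finset.abs_sum_le_sum_abs _ _).trans ?_
  rw [Finset.card_filter, Nat.cast_sum, Finset.mul_sum]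
  refine Finset.sum_le_sum fun z _ => ?_
  rw [edgeProd_eq_ite]
  split_ifs with h
  · rw [xind, if_pos (eq_of_reachable π z h (hc.preconnected _ _)), abs_mul,
      abs_of_nonneg (by linarith : (0 : ℝ) ≤ 1 - 1 / K), abs_of_nonneg (by positivity)]
    have : (0 : ℝ) ≤ lam ^ T.E.card := by positivity
    push_cast
    nlinarith
  · simp

lemma pow_le_expec_PG_sq {n K : ℕ} (hK : 2 ≤ K) {q lam : ℝ} (hq0 : 0 < q) (hq2 : q ≤ 1 / 2)
    (hlam : 0 < lam) (T : Template) (π : Fin T.v ↪ Fin n) :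
    (q * (1 - q)) ^ T.E.card ≤ expec n K q lam (fun _ y => PG n q T π y ^ 2) := by
  have hqq : 0 ≤ q * (1 - q) := mul_nonneg hq0.le (by linarith)
  have hK0 : (K : ℝ) ≠ 0 := by positivity
  rw [expec_eq_sum_condE']
  calc (q * (1 - q)) ^ T.E.card
      = ((K : ℝ)⁻¹) ^ n * ∑ _z : Lab n K, (q * (1 - q)) ^ T.E.card := by
        simp [hK0]
    _ ≤ _ := by
        gcongr with z
        rw [condE_PG_sq, ← Finset.prod_const]
        refine Finset.prod_le_prod (fun _ _ => hqq) fun e _ => ?_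
        split_ifs
        · nlinarith
        · exact le_rfl

/-- On constant labelings every factor has conditional second moment
`q(1-q) + λ(1-2q) = λ + q(1-q-2λ) ≥ λ`. -/
lemma monoProb_le_expec_PG_sq {n K : ℕ} {q lam : ℝ} (hq0 : 0 < q)
    (hql : q + 2 * lam ≤ 1) (hlam : 0 < lam) (T : Template)
    (π : Fin T.v ↪ Fin n) :
    lam ^ T.E.card * monoProb n K T π ≤ expec n K q lam (fun _ y => PG n q T π y ^ 2) := by
  have hqq : 0 ≤ q * (1 - q) := mul_nonneg hq0.le (by linarith)
  rw [expec_eq_sum_condE', monoProb, mul_left_comm, Finset.card_filter, Nat.cast_sum,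
    Finset.mul_sum]
  gcongr with z
  rw [condE_PG_sq]
  split_ifs with h
  · rw [Nat.cast_one, mul_one, ← Finset.prod_const]
    refine Finset.prod_le_prod (fun _ _ => hlam.le) fun e he => ?_
    rw [if_pos (h e he)]
    nlinarith
  · rw [Nat.cast_zero, mul_zero]
    refine Finset.prod_nonneg fun e _ => ?_
    split_ifs
    · nlinarith
    · exact hqq

lemma card_PiV_le {n : ℕ} (hn : 2 ≤ n) (T : Template) : (PiV n hn T).card ≤ n ^ (T.v - 2) := by
  set B : Finset (Fin T.v) := (Finset.univ.erase T.v1).erase T.v2 with hB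
  have hv : T.v2 ≠ T.v1 := by simp [Template.v1, Template.v2]
  have hBc : B.card = T.v - 2 := by
    rw [hB, Finset.card_erase_of_mem (by simp [hv]), Finset.card_erase_of_mem (by simp)]
    simp
    omega
  have : Fintype.card ({i // i ∈ B} → Fin n) = n ^ (T.v - 2) := by simp [hBc]
  rw [← this, ← Finset.card_univ]
  refine Finset.card_le_card_of_injOn (fun π i => π i.1) (fun _ _ => Finset.mem_univ _) ?_
  intro π hπ π' hπ' h
  simp only [PiV, Finset.coe_filter, Finset.mem_univ, true_and, Set.mem_ofPred_eq] at hπ hπ'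
  ext1 a
  by_cases h1 : a = T.v1
  · rw [h1, hπ.1, hπ'.1]
  by_cases h2 : a = T.v2
  · rw [h2, hπ.2, hπ'.2]
  exact congrFun h ⟨a, by simp [hB, h1, h2]⟩

lemma one_le_autCard (T : Template) : 1 ≤ autCard T := by
  have : Nonempty {σ : Equiv.Perm (Fin T.v) //
      σ T.v1 = T.v1 ∧ σ T.v2 = T.v2 ∧ ∀ a b, T.graph.Adj a b ↔ T.graph.Adj (σ a) (σ b)} :=
    ⟨⟨1, by simp⟩⟩
  exact Nat.card_pos

lemma sqrt_natPow {t : ℝ} (ht : 0 ≤ t) (k : ℕ) : Real.sqrt (t ^ k) = Real.sqrt t ^ k := by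
  rw [Real.sqrt_eq_iff_eq_sq (by positivity) (by positivity), ← pow_mul, mul_comm, pow_mul,
    Real.sq_sqrt ht]

/-- Clears the fractional exponents `-1/2` and `|E| / (|V| - 1)` from the right-hand side. -/
lemma rhs_eq {n : ℝ} (hn : 0 < n) {b : ℝ} (hb : 0 ≤ b) (a : ℝ) (e v : ℕ) (hv : 2 ≤ v) :
    n ^ (-(1 : ℝ) / 2) * (Real.sqrt n * a * b ^ ((e : ℝ) / ((v : ℝ) - 1))) ^ (v - 1)
      = Real.sqrt (n ^ (v - 2)) * a ^ (v - 1) * b ^ e := by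
  obtain ⟨m, rfl⟩ : ∃ m, v = m + 2 := ⟨v - 2, by omega⟩
  have h1 : m + 2 - 1 = m + 1 := by omega
  have h2 : (((m + 2 : ℕ) : ℝ) - 1) = ((m + 1 : ℕ) : ℝ) := by push_cast; ring
  rw [h1, h2, Nat.add_sub_cancel, mul_pow, mul_pow]
  have h3 : (b ^ ((e : ℝ) / ((m + 1 : ℕ) : ℝ))) ^ (m + 1) = b ^ e := by
    rw [← Real.rpow_natCast, ← Real.rpow_mul hb, div_mul_cancel₀ _ (by positivity),
      Real.rpow_natCast]
  have h4 : n ^ (-(1 : ℝ) / 2) * Real.sqrt n = 1 := by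
    rw [Real.sqrt_eq_rpow, ← Real.rpow_add hn]
    norm_num
  rw [h3, sqrt_natPow hn.le, pow_succ]
  linear_combination Real.sqrt n ^ m * a ^ (m + 1) * b ^ e * h4

/-- The bound on `|E[x Ψ_G]|` for connected `G`. Writing `A = λ^{|E|} ∑_π P(z constant on π(V))`, the
numerator of `E[x Ψ_G]` is at most `A` in absolute value, while `𝕍(G) ≥ max(A, |Π_V| q̄^{|E|})`. -/
lemma connected_bound {n K : ℕ} (hn : 2 ≤ n) (hK : 2 ≤ K) {q lam : ℝ}
    (hq0 : 0 < q) (hq2 : q ≤ 1 / 2) (hql : q + 2 * lam ≤ 1) (hlam : 0 < lam)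
    (T : Template) (hE : T.E.Nonempty) (hc : T.graph.Connected) :
    |expec n K q lam fun z y =>
        xind n K ⟨0, by omega⟩ ⟨1, by omega⟩ z * Psi n K hn q lam T y| ≤
      (n : ℝ) ^ (-(1 : ℝ) / 2) *
        (min (Real.sqrt n / K *
            (lam / Real.sqrt (q * (1 - q))) ^ ((T.E.card : ℝ) / ((T.v : ℝ) - 1)))
          (Real.sqrt ((n : ℝ) / K) *
            lam ^ ((T.E.card : ℝ) / ((T.v : ℝ) - 1) / 2))) ^ (T.v - 1) := by
  have hn0 : (0 : ℝ) < n := by exact_mod_cast (by omega : 0 < n)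
  have hK0 : (0 : ℝ) < K := by exact_mod_cast (by omega : 0 < K)
  have hqq : 0 < q * (1 - q) := mul_pos hq0 (by linarith)
  set E := T.E.card with hEc
  set N : ℝ := ((PiV n hn T).card : ℝ) with hN
  set V := VG n K hn q lam T with hV
  set A : ℝ := ∑ π ∈ PiV n hn T, lam ^ E * monoProb n K T π with hA
  have hA0 : 0 ≤ A := Finset.sum_nonneg fun π _ => by unfold monoProb; positivity
  have hN0 : 0 ≤ N := Nat.cast_nonneg _
  have hNle : N ≤ (n : ℝ) ^ (T.v - 2) := by
    rw [hN]
    exact_mod_cast card_PiV_le hn T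
  have hnum : |expec n K q lam fun z y =>
        xind n K ⟨0, by omega⟩ ⟨1, by omega⟩ z * Psi n K hn q lam T y| ≤ A / Real.sqrt V := by
    rw [expec_x_Psi, abs_div, abs_of_nonneg (Real.sqrt_nonneg _)]
    gcongr
    refine (Finset.abs_sum_le_sum_abs _ _).trans (Finset.sum_le_sum fun π hπ => ?_)
    simp only [PiV, Finset.mem_filter, Finset.mem_univ, true_and] at hπ
    have := abs_x_condE_le hK q hlam hc hE π
    rwa [hπ.1, hπ.2] at this
  have hAN : A ≤ N * (lam ^ E * ((K : ℝ)⁻¹) ^ (T.v - 1)) := by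
    rw [hA, hN, ← nsmul_eq_mul]
    refine Finset.sum_le_card_nsmul _ _ _ fun π _ => ?_
    gcongr
    exact monoProb_le hK hc π
  have hVS : ∑ π ∈ PiV n hn T, expec n K q lam (fun _ y => PG n q T π y ^ 2) ≤ V := by
    have h0 : 0 ≤ ∑ π ∈ PiV n hn T, expec n K q lam (fun _ y => PG n q T π y ^ 2) :=
      Finset.sum_nonneg fun π _ =>
        le_trans (by positivity) (pow_le_expec_PG_sq hK hq0 hq2 hlam T π)
    have h1 : (1 : ℝ) ≤ autCard T := by exact_mod_cast one_le_autCard T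
    exact le_mul_of_one_le_left h0 h1
  have hVA : A ≤ V :=
    (Finset.sum_le_sum fun π _ => monoProb_le_expec_PG_sq hq0 hql hlam T π).trans hVS
  have hVN : N * (q * (1 - q)) ^ E ≤ V := by
    refine le_trans ?_ hVS
    rw [hN, ← nsmul_eq_mul]
    exact Finset.card_nsmul_le_sum _ _ _ fun π _ => pow_le_expec_PG_sq hK hq0 hq2 hlam T π
  have hsq : 0 < Real.sqrt (q * (1 - q)) := Real.sqrt_pos.mpr hqq
  have hb1 : A / Real.sqrt V ≤ (n : ℝ) ^ (-(1 : ℝ) / 2) * (Real.sqrt n / K *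
      (lam / Real.sqrt (q * (1 - q))) ^ ((E : ℝ) / ((T.v : ℝ) - 1))) ^ (T.v - 1) := by
    rw [div_eq_mul_inv (Real.sqrt n), rhs_eq hn0 (by positivity) _ _ _ T.hv]
    refine div_le_of_le_mul₀ (Real.sqrt_nonneg _) (by positivity) ?_
    calc A ≤ N * (lam ^ E * ((K : ℝ)⁻¹) ^ (T.v - 1)) := hAN
      _ = Real.sqrt N * ((K : ℝ)⁻¹) ^ (T.v - 1) * (lam / Real.sqrt (q * (1 - q))) ^ E
            * Real.sqrt (N * (q * (1 - q)) ^ E) := by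
          rw [Real.sqrt_mul hN0, sqrt_natPow hqq.le, div_pow]
          field_simp
          rw [Real.sq_sqrt hN0]
      _ ≤ _ := by gcongr
  have hb2 : A / Real.sqrt V ≤ (n : ℝ) ^ (-(1 : ℝ) / 2) * (Real.sqrt ((n : ℝ) / K) *
      lam ^ ((E : ℝ) / ((T.v : ℝ) - 1) / 2)) ^ (T.v - 1) := by
    have hsl : lam ^ ((E : ℝ) / ((T.v : ℝ) - 1) / 2)
        = Real.sqrt lam ^ ((E : ℝ) / ((T.v : ℝ) - 1)) := by
      rw [Real.sqrt_eq_rpow, ← Real.rpow_mul hlam.le]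
      congr 1
      ring
    rw [hsl, div_eq_mul_inv (n : ℝ), Real.sqrt_mul hn0.le,
      rhs_eq hn0 (Real.sqrt_nonneg _) _ _ _ T.hv]
    calc A / Real.sqrt V ≤ Real.sqrt A := by
          refine div_le_of_le_mul₀ (Real.sqrt_nonneg _) (Real.sqrt_nonneg _) ?_
          calc A = Real.sqrt A * Real.sqrt A := (Real.mul_self_sqrt hA0).symm
            _ ≤ _ := by gcongr
      _ ≤ Real.sqrt ((n : ℝ) ^ (T.v - 2) * (lam ^ E * ((K : ℝ)⁻¹) ^ (T.v - 1))) := by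
          gcongr
          exact hAN.trans (by gcongr)
      _ = _ := by
          rw [← sqrt_natPow (by positivity), ← sqrt_natPow hlam.le, Real.sqrt_mul (by positivity),
            Real.sqrt_mul (by positivity)]
          ring
  refine hnum.trans ?_
  rcases min_choice (Real.sqrt n / K *
      (lam / Real.sqrt (q * (1 - q))) ^ ((E : ℝ) / ((T.v : ℝ) - 1)))
    (Real.sqrt ((n : ℝ) / K) * lam ^ ((E : ℝ) / ((T.v : ℝ) - 1) / 2)) with h | h
  · rw [h]; exact hb1
  · rw [h]; exact hb2

theorem statement19 (n K D : ℕ) (q lam : ℝ)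
    (hn : 2 ≤ n) (hK : 2 ≤ K) (hKn : K ≤ n)
    (hq0 : 0 < q) (hq2 : q ≤ 1 / 2) (hql : q + 2 * lam ≤ 1) (hlam : 0 < lam) (hD : 2 ≤ D)
    (𝒢 : Set Template) (h𝒢 : IsTemplateBasis D 𝒢) (T : Template) (hT : T ∈ 𝒢) :
    (T.graph.Connected →
      |expec n K q lam fun z y =>
          xind n K ⟨0, by omega⟩ ⟨1, by omega⟩ z * Psi n K hn q lam T y| ≤
        (n : ℝ) ^ (-(1 : ℝ) / 2) *
          (min (Real.sqrt n / K *
              (lam / Real.sqrt (q * (1 - q))) ^ ((T.E.card : ℝ) / ((T.v : ℝ) - 1)))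
            (Real.sqrt ((n : ℝ) / K) *
              lam ^ ((T.E.card : ℝ) / ((T.v : ℝ) - 1) / 2))) ^ (T.v - 1)) ∧
    ((∃ w : Fin T.v, ¬ T.graph.Reachable w T.v1 ∧ ¬ T.graph.Reachable w T.v2) →
      expec n K q lam (fun z y =>
        xind n K ⟨0, by omega⟩ ⟨1, by omega⟩ z * Psi n K hn q lam T y) = 0) ∧
    (¬ T.graph.Reachable T.v1 T.v2 →
      expec n K q lam (fun z y =>
        xind n K ⟨0, by omega⟩ ⟨1, by omega⟩ z * Psi n K hn q lam T y) = 0) := by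
  obtain ⟨h1, -, hiso⟩ := h𝒢.1 T hT
  have hE : T.E.Nonempty := Finset.card_pos.mp h1
  refine ⟨fun hc => connected_bound hn hK hq0 hq2 hql hlam T hE hc, ?_, ?_⟩
  · rintro ⟨w, hw1, hw2⟩
    -- `w` is not distinguished, hence not isolated: its component has an edge.
    have hw : ¬ IsIsolated T w := hiso w
      (fun h => hw1 (h ▸ SimpleGraph.Reachable.refl _))
      (fun h => hw2 (h ▸ SimpleGraph.Reachable.refl _))
    simp only [IsIsolated, not_forall] at hw
    obtain ⟨e, he, hew⟩ := hw
    refine expec_x_Psi_eq_zero hn hK q lam T he fun h => hw1 ?_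
    by_cases h' : e.1 = w
    · exact h' ▸ h.1
    · have : e.2 = w := by
        by_contra h2
        exact hew ⟨h', h2⟩
      exact this ▸ (reachable_of_mem he).symm.trans h.1
  · intro h12
    obtain ⟨e, he⟩ := hE
    exact expec_x_Psi_eq_zero hn hK q lam T he fun h => h12 (h.1.symm.trans h.2)

end SBM
end
end
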